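/- Let Γ be a 3-edge connected metric graph with canonical model (G₀, l₀) with |V(G₀)| > 3, and let D ∈ W¹₃(Γ). Then for every x ∈ V(G₀) there exists y ∈ V(G₀) such that the admissible representatives D_x and D_y of D are consecutive: there is an edge (of the refinement G_D of G₀ obtained by inserting vertices at all points in supports of admissible representatives of D) with one endpoint in Supp(D_x) and the other in Supp(D_y). -/

import Mathlib

open scoped Classical

/-!
Combinatorial models of metric graphs: a finite (multi-)graph together with a
positive length for each edge.  A metric graph is determined by such a model;
its canonical model is the (unique) model with all valences at least `3`.
-/

structure MetricGraphModel : Type 1 where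
  V : Type
  E : Type
  fV : Fintype V
  fE : Fintype E
  dV : DecidableEq V
  dE : DecidableEq E
  src : E → V
  tgt : E → V
  len : E → ℝ
  len_pos : ∀ e, 0 < len e

attribute [instance] MetricGraphModel.fV MetricGraphModel.fE
attribute [instance] MetricGraphModel.dV MetricGraphModel.dE

namespace MetricGraphModel

/-- An edge is incident to a vertex. -/
def Incident (Γ : MetricGraphModel) (e : Γ.E) (v : Γ.V) : Prop :=
  Γ.src e = v ∨ Γ.tgt e = v

/-- Incidence multiplicity (a loop counts twice). -/
def incid (Γ : MetricGraphModel) (e : Γ.E) (v : Γ.V) : ℕ :=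
  (if Γ.src e = v then 1 else 0) + (if Γ.tgt e = v then 1 else 0)

/-- The valence of a vertex. -/
def valence (Γ : MetricGraphModel) (v : Γ.V) : ℕ := ∑ e : Γ.E, Γ.incid e v

def dSrc (Γ : MetricGraphModel) (x : Γ.E × Bool) : Γ.V :=
  if x.2 then Γ.src x.1 else Γ.tgt x.1

def dTgt (Γ : MetricGraphModel) (x : Γ.E × Bool) : Γ.V :=
  if x.2 then Γ.tgt x.1 else Γ.src x.1

/-- Walks, given as lists of oriented edges. -/
def IsWalk (Γ : MetricGraphModel) : List (Γ.E × Bool) → Γ.V → Γ.V → Prop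
  | [], u, v => u = v
  | x :: xs, u, v => Γ.dSrc x = u ∧ IsWalk Γ xs (Γ.dTgt x) v

def Connected (Γ : MetricGraphModel) : Prop :=
  Nonempty Γ.V ∧ ∀ u v : Γ.V, ∃ L, IsWalk Γ L u v

/-- Removing any set of at most `2` edges leaves the graph connected. -/
def ThreeEdgeConnected (Γ : MetricGraphModel) : Prop :=
  ∀ S : Finset Γ.E, S.card ≤ 2 → ∀ u v : Γ.V,
    ∃ L, IsWalk Γ L u v ∧ ∀ x ∈ L, x.1 ∉ S

def Loopless (Γ : MetricGraphModel) : Prop := ∀ e : Γ.E, Γ.src e ≠ Γ.tgt e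

/-- A canonical model: connected, with all valences at least `3`. -/
def IsCanonical (Γ : MetricGraphModel) : Prop :=
  Γ.Connected ∧ ∀ v : Γ.V, 3 ≤ Γ.valence v

/-- A (model of a) metric tree. -/
def IsTreeModel (Γ : MetricGraphModel) : Prop :=
  Γ.Connected ∧ Fintype.card Γ.E + 1 = Fintype.card Γ.V

/-- Points of the associated metric graph: vertices together with interior
points of edges (parametrised by their distance from the source). -/
abbrev Pt (Γ : MetricGraphModel) : Type :=
  Γ.V ⊕ Σ e : Γ.E, {t : ℝ // 0 < t ∧ t < Γ.len e}

end MetricGraphModel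

open MetricGraphModel

/-- The (canonical) loopless model: insert a vertex at the midpoint of every loop. -/
noncomputable def looplessModel (Γ : MetricGraphModel) : MetricGraphModel where
  V := Γ.V ⊕ {e : Γ.E // Γ.src e = Γ.tgt e}
  E := {e : Γ.E // Γ.src e ≠ Γ.tgt e} ⊕ ({e : Γ.E // Γ.src e = Γ.tgt e} × Bool)
  fV := inferInstance
  fE := inferInstance
  dV := inferInstance
  dE := inferInstance
  src := fun x => match x with
    | Sum.inl e => Sum.inl (Γ.src e.1)
    | Sum.inr p => Sum.inl (Γ.src p.1.1)
  tgt := fun x => match x with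
    | Sum.inl e => Sum.inl (Γ.tgt e.1)
    | Sum.inr p => Sum.inr p.1
  len := fun x => match x with
    | Sum.inl e => Γ.len e.1
    | Sum.inr p => Γ.len p.1.1 / 2
  len_pos := by
    rintro (e | p)
    · exact Γ.len_pos e.1
    · have h := Γ.len_pos p.1.1
      show 0 < Γ.len p.1.1 / 2
      linarith

/-- The metric subgraph obtained by removing all loops. -/
noncomputable def deloop (Γ : MetricGraphModel) : MetricGraphModel where
  V := Γ.V
  E := {e : Γ.E // Γ.src e ≠ Γ.tgt e}
  fV := inferInstance
  fE := inferInstance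
  dV := inferInstance
  dE := inferInstance
  src := fun e => Γ.src e.1
  tgt := fun e => Γ.tgt e.1
  len := fun e => Γ.len e.1
  len_pos := fun e => Γ.len_pos e.1

namespace MetricGraphModel

/-! ### Divisors and rational functions -/

abbrev Divisor (Γ : MetricGraphModel) : Type := Γ.Pt → ℤ

noncomputable def divDegree {Γ : MetricGraphModel} (D : Divisor Γ) : ℤ := finsum D

def DivEffective {Γ : MetricGraphModel} (D : Divisor Γ) : Prop := ∀ p, 0 ≤ D p

def DivFinSupp {Γ : MetricGraphModel} (D : Divisor Γ) : Prop :=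
  (Function.support D).Finite

noncomputable def unitDiv (Γ : MetricGraphModel) (p : Γ.Pt) : Divisor Γ :=
  fun q => if q = p then 1 else 0

/-- `f` is continuous piecewise linear with integer slopes on `[0, L]`. -/
def PLInt (f : ℝ → ℝ) (L : ℝ) : Prop :=
  ∃ n : ℕ, ∃ t : Fin (n + 1) → ℝ, t 0 = 0 ∧ t (Fin.last n) = L ∧ StrictMono t ∧
    ∀ i : Fin n, ∃ m : ℤ, ∀ s ∈ Set.Icc (t i.castSucc) (t i.succ),
      f s = f (t i.castSucc) + (m : ℝ) * (s - t i.castSucc)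

/-- The (integer) outgoing slope of `f` to the right of `t0`. -/
noncomputable def slopeR (f : ℝ → ℝ) (t0 : ℝ) : ℤ :=
  if h : ∃ m : ℤ, ∃ ε : ℝ, 0 < ε ∧ ∀ s ∈ Set.Icc t0 (t0 + ε),
      f s = f t0 + (m : ℝ) * (s - t0)
  then h.choose else 0

/-- The (integer) outgoing slope of `f` to the left of `t0`. -/
noncomputable def slopeL (f : ℝ → ℝ) (t0 : ℝ) : ℤ :=
  if h : ∃ m : ℤ, ∃ ε : ℝ, 0 < ε ∧ ∀ s ∈ Set.Icc (t0 - ε) t0,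
      f s = f t0 + (m : ℝ) * (t0 - s)
  then h.choose else 0

/-- A rational function: continuous, piecewise linear with integer slopes. -/
structure RationalFunction (Γ : MetricGraphModel) where
  vVal : Γ.V → ℝ
  eFun : Γ.E → ℝ → ℝ
  pl : ∀ e, PLInt (eFun e) (Γ.len e)
  srcVal : ∀ e, eFun e 0 = vVal (Γ.src e)
  tgtVal : ∀ e, eFun e (Γ.len e) = vVal (Γ.tgt e)

/-- The principal divisor of a rational function: the sum of the outgoing
slopes at every point. -/
noncomputable def ratDiv {Γ : MetricGraphModel} (f : RationalFunction Γ) : Divisor Γ :=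
  fun p => match p with
  | Sum.inl v => ∑ e : Γ.E,
      ((if Γ.src e = v then slopeR (f.eFun e) 0 else 0) +
       (if Γ.tgt e = v then slopeL (f.eFun e) (Γ.len e) else 0))
  | Sum.inr q => slopeR (f.eFun q.1) q.2.1 + slopeL (f.eFun q.1) q.2.1

/-- Evaluation of a rational function at a point of the metric graph. -/
def ratEval {Γ : MetricGraphModel} (f : RationalFunction Γ) : Γ.Pt → ℝ
  | Sum.inl v => f.vVal v
  | Sum.inr q => f.eFun q.1 q.2.1

/-- Linear equivalence of divisors. -/
def LinEquiv (Γ : MetricGraphModel) (D D' : Divisor Γ) : Prop :=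
  ∃ f : RationalFunction Γ, ∀ p, D p = D' p + ratDiv f p

/-- The Baker–Norine rank of `D` is at least `k`. -/
def RankGE (Γ : MetricGraphModel) (D : Divisor Γ) (k : ℕ) : Prop :=
  ∀ A : Divisor Γ, DivEffective A → DivFinSupp A → divDegree A = (k : ℤ) →
    ∃ B : Divisor Γ, DivEffective B ∧ DivFinSupp B ∧
      LinEquiv Γ (fun p => D p - A p) B

/-- `W¹₃(Γ) ≠ ∅`: some divisor of degree `3` has rank at least `1`. -/
def DivisoriallyTrigonal (Γ : MetricGraphModel) : Prop :=
  ∃ D : Divisor Γ, DivFinSupp D ∧ divDegree D = 3 ∧ RankGE Γ D 1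

end MetricGraphModel

/-! ### Harmonic morphisms of metric graphs -/

/-- An indexed morphism of metric graph models.  An edge is either mapped onto
an edge (with an integer stretching index `mu`) or contracted to a vertex. -/
structure MGMorphism (Γ Δ : MetricGraphModel) where
  vMap : Γ.V → Δ.V
  eMap : Γ.E → Δ.E ⊕ Δ.V
  mu : Γ.E → ℕ
  mu_zero : ∀ e, mu e = 0 ↔ ∃ v', eMap e = Sum.inr v'
  contract_ok : ∀ e v', eMap e = Sum.inr v' →
    vMap (Γ.src e) = v' ∧ vMap (Γ.tgt e) = v'
  edge_ok : ∀ e e', eMap e = Sum.inl e' →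
    ((vMap (Γ.src e) = Δ.src e' ∧ vMap (Γ.tgt e) = Δ.tgt e') ∨
     (vMap (Γ.src e) = Δ.tgt e' ∧ vMap (Γ.tgt e) = Δ.src e'))
  len_ok : ∀ e e', eMap e = Sum.inl e' → (mu e : ℝ) * Γ.len e = Δ.len e'

namespace MGMorphism

variable {Γ Δ : MetricGraphModel}

/-- The local sum `m_φ(v)` computed along a fixed edge `e'` at `φ(v)`. -/
noncomputable def locDeg (φ : MGMorphism Γ Δ) (v : Γ.V) (e' : Δ.E) : ℕ :=
  ∑ e : Γ.E, if φ.eMap e = Sum.inl e' then φ.mu e * Γ.incid e v else 0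

def Harmonic (φ : MGMorphism Γ Δ) : Prop :=
  ∀ (v : Γ.V) (e₁ e₂ : Δ.E),
    Δ.Incident e₁ (φ.vMap v) → Δ.Incident e₂ (φ.vMap v) →
      locDeg φ v e₁ = locDeg φ v e₂

def Nondegenerate (φ : MGMorphism Γ Δ) : Prop :=
  ∀ v : Γ.V, ∃ e' : Δ.E, Δ.Incident e' (φ.vMap v) ∧ 1 ≤ locDeg φ v e'

def HasDegree (φ : MGMorphism Γ Δ) (d : ℕ) : Prop :=
  ∀ e' : Δ.E, (∑ e : Γ.E, if φ.eMap e = Sum.inl e' then φ.mu e else 0) = d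

/-- The horizontal multiplicity `m_φ(v)` at a vertex. -/
noncomputable def mVal (φ : MGMorphism Γ Δ) (v : Γ.V) : ℕ :=
  (Finset.univ.filter fun e' : Δ.E => Δ.Incident e' (φ.vMap v)).sup (locDeg φ v)

end MGMorphism

/-! ### Isomorphisms, subdivisions and tropical modifications -/

def sameEndsMap (Γ Δ : MetricGraphModel) (f : Γ.V → Δ.V) (e : Γ.E) (e' : Δ.E) : Prop :=
  (f (Γ.src e) = Δ.src e' ∧ f (Γ.tgt e) = Δ.tgt e') ∨
  (f (Γ.src e) = Δ.tgt e' ∧ f (Γ.tgt e) = Δ.src e')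

structure MGMIso (Γ Δ : MetricGraphModel) where
  vEquiv : Γ.V ≃ Δ.V
  eEquiv : Γ.E ≃ Δ.E
  ends : ∀ e, sameEndsMap Γ Δ (fun v => vEquiv v) e (eEquiv e)
  len_eq : ∀ e, Δ.len (eEquiv e) = Γ.len e

/-- Deletion of a leaf (a valence-one vertex together with its edge). -/
def LeafDeletion (Δ Δ' : MetricGraphModel) : Prop :=
  ∃ (v₀ : Δ.V) (e₀ : Δ.E), Δ.valence v₀ = 1 ∧ Δ.Incident e₀ v₀ ∧
    ∃ (fv : Δ'.V ≃ {v : Δ.V // v ≠ v₀}) (fe : Δ'.E ≃ {e : Δ.E // e ≠ e₀}),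
      (∀ e : Δ'.E, sameEndsMap Δ' Δ (fun v => (fv v).1) e (fe e).1) ∧
      ∀ e : Δ'.E, Δ.len (fe e).1 = Δ'.len e

/-- Suppression of a valence-two vertex, merging its two edges and adding
their lengths. -/
def SeriesReduction (Δ Δ' : MetricGraphModel) : Prop :=
  ∃ (v₀ : Δ.V) (e₁ e₂ : Δ.E) (u₁ u₂ : Δ.V),
    e₁ ≠ e₂ ∧ Δ.valence v₀ = 2 ∧ u₁ ≠ v₀ ∧ u₂ ≠ v₀ ∧
    ({Δ.src e₁, Δ.tgt e₁} : Set Δ.V) = {v₀, u₁} ∧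
    ({Δ.src e₂, Δ.tgt e₂} : Set Δ.V) = {v₀, u₂} ∧
    ∃ (fv : Δ'.V ≃ {v : Δ.V // v ≠ v₀}) (ebar : Δ'.E)
      (fe : {e : Δ'.E // e ≠ ebar} ≃ {e : Δ.E // e ≠ e₁ ∧ e ≠ e₂}),
      Δ'.len ebar = Δ.len e₁ + Δ.len e₂ ∧
      ({(fv (Δ'.src ebar)).1, (fv (Δ'.tgt ebar)).1} : Set Δ.V) = {u₁, u₂} ∧
      (∀ e : {e : Δ'.E // e ≠ ebar},
        sameEndsMap Δ' Δ (fun v => (fv v).1) e.1 (fe e).1) ∧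
      ∀ e : {e : Δ'.E // e ≠ ebar}, Δ.len (fe e).1 = Δ'.len e.1

def ReductionStep (Δ Δ' : MetricGraphModel) : Prop :=
  LeafDeletion Δ Δ' ∨ SeriesReduction Δ Δ' ∨ Nonempty (MGMIso Δ Δ')

/-- `Δ` reduces to `Γ` by deleting leaves and suppressing valence-two
vertices.  When `Γ` is a canonical model, this says exactly that the metric
graph of `Δ` is a tropical modification of the metric graph of `Γ`. -/
def Reduces (Δ Γ : MetricGraphModel) : Prop :=
  Relation.ReflTransGen ReductionStep Δ Γ

def IsTropicalModificationOf (Δ Γ : MetricGraphModel) : Prop := Reduces Δ Γ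

def ModelStep (Δ Δ' : MetricGraphModel) : Prop :=
  SeriesReduction Δ Δ' ∨ Nonempty (MGMIso Δ Δ')

/-- `Δ` and `Γ` are models of the same metric graph (no trees added). -/
def SameMetricGraph (Δ Γ : MetricGraphModel) : Prop :=
  Relation.ReflTransGen ModelStep Δ Γ

/-- `Γ` is trigonal: a tropical modification of `Γ` admits a non-degenerate
harmonic morphism of degree `3` onto a metric tree. -/
def Trigonal (Γ : MetricGraphModel) : Prop :=
  ∃ Δ T : MetricGraphModel, IsTropicalModificationOf Δ Γ ∧ T.IsTreeModel ∧
    ∃ φ : MGMorphism Δ T,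
      MGMorphism.Harmonic φ ∧ MGMorphism.Nondegenerate φ ∧ MGMorphism.HasDegree φ 3

/-- `Γ` is strictly trigonal: `Γ` itself (i.e. some model of the same metric
graph) admits a non-degenerate harmonic morphism of degree `3` onto a metric
tree. -/
def StrictlyTrigonal (Γ : MetricGraphModel) : Prop :=
  ∃ Δ T : MetricGraphModel, SameMetricGraph Δ Γ ∧ T.IsTreeModel ∧
    ∃ φ : MGMorphism Δ T,
      MGMorphism.Harmonic φ ∧ MGMorphism.Nondegenerate φ ∧ MGMorphism.HasDegree φ 3

/-! ### Embeddings up to subdivision (for tropical modifications of morphisms) -/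

structure SubEmbed (G Δ : MetricGraphModel) where
  v : G.V → Δ.V
  inj : Function.Injective v
  path : G.E → List (Δ.E × Bool)
  ne : ∀ e, path e ≠ []
  walk : ∀ e, MetricGraphModel.IsWalk Δ (path e) (v (G.src e)) (v (G.tgt e))
  len_sum : ∀ e, ((path e).map fun x => Δ.len x.1).sum = G.len e

/-! ### Pullback of points along a harmonic morphism -/

/-- `φ` maps the point `p` of `Γ` to the point `t` of `Δ`. -/
def MapsToPt {Γ Δ : MetricGraphModel} (φ : MGMorphism Γ Δ) : Γ.Pt → Δ.Pt → Prop
  | Sum.inl v, Sum.inl t => φ.vMap v = t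
  | Sum.inl _, Sum.inr _ => False
  | Sum.inr q, Sum.inl t => φ.eMap q.1 = Sum.inr t
  | Sum.inr q, Sum.inr r =>
      φ.eMap q.1 = Sum.inl r.1 ∧
      ((φ.vMap (Γ.src q.1) = Δ.src r.1 ∧ (r.2.1 : ℝ) = (φ.mu q.1 : ℝ) * (q.2.1 : ℝ)) ∨
       (φ.vMap (Γ.src q.1) = Δ.tgt r.1 ∧
         (r.2.1 : ℝ) = Δ.len r.1 - (φ.mu q.1 : ℝ) * (q.2.1 : ℝ)))

/-- Horizontal multiplicity of a point. -/
noncomputable def hmult {Γ Δ : MetricGraphModel} (φ : MGMorphism Γ Δ) : Γ.Pt → ℕ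
  | Sum.inl v => MGMorphism.mVal φ v
  | Sum.inr q => φ.mu q.1

/-- The pullback divisor `φ*(t)` of a point `t`. -/
noncomputable def pullbackDiv {Γ Δ : MetricGraphModel} (φ : MGMorphism Γ Δ)
    (t : Δ.Pt) : MetricGraphModel.Divisor Γ :=
  fun p => if MapsToPt φ p t then (hmult φ p : ℤ) else 0

/-! ### Points on edges, admissible representatives, consecutive divisors -/

open MetricGraphModel

/-- `p` is an interior point of the edge `e`. -/
def interiorOf (Γ : MetricGraphModel) (e : Γ.E) (p : Γ.Pt) : Prop :=
  ∃ q : {t : ℝ // 0 < t ∧ t < Γ.len e}, p = Sum.inr ⟨e, q⟩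

def SameEdgeInterior (Γ : MetricGraphModel) (p q : Γ.Pt) : Prop :=
  ∃ e : Γ.E, interiorOf Γ e p ∧ interiorOf Γ e q

/-- `Dx` is the admissible representative of `D` with respect to the vertex
`x`: it is linearly equivalent to `D`, of the form `x + x₁ + x₂`, and `x₁, x₂`
do not both lie in the interior of one edge. -/
def AdmissibleRep (Γ : MetricGraphModel) (D : Divisor Γ) (x : Γ.V)
    (Dx : Divisor Γ) : Prop :=
  LinEquiv Γ D Dx ∧
  ∃ p q : Γ.Pt,
    Dx = (fun z => unitDiv Γ (Sum.inl x) z + unitDiv Γ p z + unitDiv Γ q z) ∧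
    ¬ SameEdgeInterior Γ p q

/-- `p` lies on the (closed) edge `e` at distance `s` from its source. -/
def LiesOn (Γ : MetricGraphModel) (e : Γ.E) (p : Γ.Pt) (s : ℝ) : Prop :=
  (p = Sum.inl (Γ.src e) ∧ s = 0) ∨ (p = Sum.inl (Γ.tgt e) ∧ s = Γ.len e) ∨
  (∃ h : 0 < s ∧ s < Γ.len e, p = Sum.inr ⟨e, ⟨s, h⟩⟩)

/-- Vertices of the refinement `G_D`: vertices of `G₀` together with all
support points of admissible representatives of `D`. -/
def SpecialPt (Γ : MetricGraphModel) (D : Divisor Γ) (p : Γ.Pt) : Prop :=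
  (∃ v : Γ.V, p = Sum.inl v) ∨
  ∃ (x : Γ.V) (Dx : Divisor Γ), AdmissibleRep Γ D x Dx ∧ Dx p ≠ 0

/-- An edge of the refinement `G_D` joining the supports of `Dx` and `Dy`:
a segment of an edge of `Γ` between a point of `Supp Dx` and a point of
`Supp Dy` containing no vertex of `G_D` in its interior. -/
def ConnSeg (Γ : MetricGraphModel) (D Dx Dy : Divisor Γ) (e : Γ.E) (s t : ℝ) : Prop :=
  s < t ∧ ∃ p q : Γ.Pt, LiesOn Γ e p s ∧ LiesOn Γ e q t ∧
    ((Dx p ≠ 0 ∧ Dy q ≠ 0) ∨ (Dy p ≠ 0 ∧ Dx q ≠ 0)) ∧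
    ∀ r, s < r → r < t → ∀ z, LiesOn Γ e z r → ¬ SpecialPt Γ D z

/-- Two admissible representatives are consecutive. -/
def Consecutive (Γ : MetricGraphModel) (D Dx Dy : Divisor Γ) : Prop :=
  Dx ≠ Dy ∧ ∃ e s t, ConnSeg Γ D Dx Dy e s t

/-- The open segment of `e` between parameters `s` and `t`, as a set of points. -/
def segSet (Γ : MetricGraphModel) (e : Γ.E) (s t : ℝ) : Set Γ.Pt :=
  {z | ∃ r, s < r ∧ r < t ∧ LiesOn Γ e z r}

/-- Two points can be joined inside one edge avoiding the removed set `R`. -/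
def AvoidAdj (Γ : MetricGraphModel) (R : Set Γ.Pt) (p q : Γ.Pt) : Prop :=
  ∃ (e : Γ.E) (s t : ℝ), s ≤ t ∧
    ((LiesOn Γ e p s ∧ LiesOn Γ e q t) ∨ (LiesOn Γ e q s ∧ LiesOn Γ e p t)) ∧
    ∀ r, s < r → r < t → ∀ z, LiesOn Γ e z r → z ∉ R

/-- The complement of `R` in the metric graph is connected. -/
def ComplementConnected (Γ : MetricGraphModel) (R : Set Γ.Pt) : Prop :=
  ∀ p q : Γ.Pt, p ∉ R → q ∉ R →
    Relation.ReflTransGen (fun a b => a ∉ R ∧ b ∉ R ∧ AvoidAdj Γ R a b) p q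

/-! ### Minimizing/maximizing sets of a rational function -/

def minSet {Γ : MetricGraphModel} (f : RationalFunction Γ) : Set Γ.Pt :=
  {p | ∀ q, ratEval f p ≤ ratEval f q}

def maxSet {Γ : MetricGraphModel} (f : RationalFunction Γ) : Set Γ.Pt :=
  {p | ∀ q, ratEval f q ≤ ratEval f p}

/-- `p` is a boundary point of `A`: it belongs to `A` and there are points of
the complement arbitrarily close to it along some edge. -/
def InBoundary (Γ : MetricGraphModel) (A : Set Γ.Pt) (p : Γ.Pt) : Prop :=
  p ∈ A ∧ ∃ (e : Γ.E) (s : ℝ), LiesOn Γ e p s ∧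
    ∀ ε : ℝ, 0 < ε → ∃ r z, |r - s| < ε ∧ LiesOn Γ e z r ∧ z ∉ A

/-- There is an edge leaving `A` at `p`, in the direction of `e` at parameter
`s` (increasing if `b = true`, decreasing if `b = false`). -/
def ExitsAt (Γ : MetricGraphModel) (A : Set Γ.Pt) (p : Γ.Pt) (e : Γ.E)
    (s : ℝ) (b : Bool) : Prop :=
  LiesOn Γ e p s ∧
  (b = true → ∃ ε : ℝ, 0 < ε ∧ s + ε ≤ Γ.len e ∧
    ∀ r, s < r → r < s + ε → ∀ z, LiesOn Γ e z r → z ∉ A) ∧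
  (b = false → ∃ ε : ℝ, 0 < ε ∧ 0 ≤ s - ε ∧
    ∀ r, s - ε < r → r < s → ∀ z, LiesOn Γ e z r → z ∉ A)

/-!
**Uniqueness of admissible representatives.**  Suppose that `div h` is the difference of two
admissible representatives at `x`.  The chip at `x` cancels, so `div h` is also the difference of
two effective divisors of degree `2`.  Every edge leaving a superlevel set of `h` among the vertices
needs a chip of its own for `h` to descend along it, but a nontrivial cut has at least three edges;
hence `h` is constant on the vertices.  Since neither divisor has two chips in the interior of one
edge, `h` cannot leave that constant value and come back to it inside an edge, so `div h = 0`.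

**Existence.**  The rank condition gives `D ∼ x + B` with `B` effective of degree `2`.  Two chips of
`B` inside one edge may be slid apart, keeping the sum of their positions, until one of them is a
vertex.

**Consecutiveness.**  By uniqueness only finitely many points lie in supports of admissible
representatives.  There are more than three vertices, so some vertex is not in the support of `D_x`,
and on a walk to it from `x` some edge has exactly one endpoint in that support.  Of some
two successive vertices of `G_D` on this edge, one lies in the support of `D_x` and the other does
not; the latter belongs to the support of some `D_y`.
-/

namespace MetricGraphModel

section PiecewiseLinear

open Set Filter Topology

variable {f g : ℝ → ℝ} {a b x L : ℝ} {m n : ℤ}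

/-- `m` is the outgoing slope of `f` to the right of `x`: the relation whose value is chosen by
`slopeR`. -/
def HasSlopeR (f : ℝ → ℝ) (x : ℝ) (m : ℤ) : Prop :=
  ∀ᶠ s in 𝓝[>] x, f s = f x + m * (s - x)

/-- `m` is the outgoing slope of `f` to the left of `x`: the relation whose value is chosen by
`slopeL`. -/
def HasSlopeL (f : ℝ → ℝ) (x : ℝ) (m : ℤ) : Prop :=
  ∀ᶠ s in 𝓝[<] x, f s = f x + m * (x - s)

/-- `f` is affine with integer slope `m` on `[a, b]`. -/
def HasSlopeOn (f : ℝ → ℝ) (m : ℤ) (a b : ℝ) : Prop :=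
  ∀ s ∈ Icc a b, f s = f a + m * (s - a)

lemma hasSlopeR_iff_exists_Icc :
    HasSlopeR f x m ↔ ∃ ε : ℝ, 0 < ε ∧ ∀ s ∈ Icc x (x + ε), f s = f x + (m : ℝ) * (s - x) := by
  rw [HasSlopeR, Filter.Eventually, mem_nhdsGT_iff_exists_Ioc_subset]
  constructor
  · rintro ⟨u, hu, h⟩
    refine ⟨u - x, sub_pos.2 hu, fun s hs => ?_⟩
    rcases hs.1.eq_or_lt with rfl | hxs
    · simp
    · exact h ⟨hxs, by simpa using hs.2⟩
  · rintro ⟨ε, hε, h⟩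
    exact ⟨x + ε, lt_add_of_pos_right x hε, fun s hs => h s ⟨hs.1.le, hs.2⟩⟩

lemma hasSlopeL_iff_exists_Icc :
    HasSlopeL f x m ↔ ∃ ε : ℝ, 0 < ε ∧ ∀ s ∈ Icc (x - ε) x, f s = f x + (m : ℝ) * (x - s) := by
  rw [HasSlopeL, Filter.Eventually, mem_nhdsLT_iff_exists_Ico_subset]
  constructor
  · rintro ⟨l, hl, h⟩
    refine ⟨x - l, sub_pos.2 hl, fun s hs => ?_⟩
    rcases hs.2.eq_or_lt with rfl | hsx
    · simp
    · exact h ⟨by simpa using hs.1, hsx⟩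
  · rintro ⟨ε, hε, h⟩
    exact ⟨x - ε, sub_lt_self x hε, fun s hs => h s ⟨hs.1, hs.2.le⟩⟩

lemma HasSlopeR.unique (hm : HasSlopeR f x m) (hn : HasSlopeR f x n) : m = n := by
  obtain ⟨s, ⟨hms, hns⟩, hxs⟩ := ((hm.and hn).and self_mem_nhdsWithin).exists
  have hslope : (m : ℝ) * (s - x) = n * (s - x) := by linarith
  exact_mod_cast mul_right_cancel₀ (sub_pos.2 hxs).ne' hslope

lemma HasSlopeL.unique (hm : HasSlopeL f x m) (hn : HasSlopeL f x n) : m = n := by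
  obtain ⟨s, ⟨hms, hns⟩, hsx⟩ := ((hm.and hn).and self_mem_nhdsWithin).exists
  have hslope : (m : ℝ) * (x - s) = n * (x - s) := by linarith
  exact_mod_cast mul_right_cancel₀ (sub_pos.2 hsx).ne' hslope

lemma HasSlopeR.slopeR_eq (h : HasSlopeR f x m) : slopeR f x = m := by
  have hex : ∃ m : ℤ, ∃ ε : ℝ, 0 < ε ∧ ∀ s ∈ Icc x (x + ε), f s = f x + (m : ℝ) * (s - x) :=
    ⟨m, hasSlopeR_iff_exists_Icc.1 h⟩
  rw [slopeR, dif_pos hex]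
  exact (hasSlopeR_iff_exists_Icc.2 hex.choose_spec).unique h

lemma HasSlopeL.slopeL_eq (h : HasSlopeL f x m) : slopeL f x = m := by
  have hex : ∃ m : ℤ, ∃ ε : ℝ, 0 < ε ∧ ∀ s ∈ Icc (x - ε) x, f s = f x + (m : ℝ) * (x - s) :=
    ⟨m, hasSlopeL_iff_exists_Icc.1 h⟩
  rw [slopeL, dif_pos hex]
  exact (hasSlopeL_iff_exists_Icc.2 hex.choose_spec).unique h

lemma HasSlopeR.add (hf : HasSlopeR f x m) (hg : HasSlopeR g x n) :
    HasSlopeR (f + g) x (m + n) := by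
  filter_upwards [hf, hg] with s hfs hgs
  simp only [Pi.add_apply, hfs, hgs]
  push_cast
  ring

lemma HasSlopeL.add (hf : HasSlopeL f x m) (hg : HasSlopeL g x n) :
    HasSlopeL (f + g) x (m + n) := by
  filter_upwards [hf, hg] with s hfs hgs
  simp only [Pi.add_apply, hfs, hgs]
  push_cast
  ring

lemma HasSlopeR.neg (hf : HasSlopeR f x m) : HasSlopeR (-f) x (-m) := by
  filter_upwards [hf] with s hfs
  simp only [Pi.neg_apply, hfs]
  push_cast
  ring

lemma HasSlopeL.neg (hf : HasSlopeL f x m) : HasSlopeL (-f) x (-m) := by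
  filter_upwards [hf] with s hfs
  simp only [Pi.neg_apply, hfs]
  push_cast
  ring

lemma HasSlopeOn.hasSlopeR (h : HasSlopeOn f m a b) (hx : x ∈ Ico a b) : HasSlopeR f x m := by
  filter_upwards [Ioo_mem_nhdsGT hx.2] with s hs
  rw [h s ⟨hx.1.trans hs.1.le, hs.2.le⟩, h x ⟨hx.1, hx.2.le⟩]
  ring

lemma HasSlopeOn.hasSlopeL (h : HasSlopeOn f m a b) (hx : x ∈ Ioc a b) :
    HasSlopeL f x (-m) := by
  filter_upwards [Ioo_mem_nhdsLT hx.1] with s hs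
  rw [h s ⟨hs.1.le, hs.2.le.trans hx.2⟩, h x ⟨hx.1.le, hx.2⟩]
  push_cast
  ring

/-- The sum of the two outgoing slopes of `f` at `x`, which is the coefficient of a principal
divisor at an interior point of an edge. -/
noncomputable def kink (f : ℝ → ℝ) (x : ℝ) : ℤ := slopeR f x + slopeL f x

lemma HasSlopeOn.kink_eq_zero (h : HasSlopeOn f m a b) (hx : x ∈ Ioo a b) : kink f x = 0 := by
  rw [kink, (h.hasSlopeR ⟨hx.1.le, hx.2⟩).slopeR_eq, (h.hasSlopeL ⟨hx.1, hx.2.le⟩).slopeL_eq,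
    add_neg_cancel]

/-- `f` is piecewise linear with integer slopes on `[a, b]`, expressed locally by the existence of
one-sided slopes.  On `[0, L]` this is `PLInt`, see `plInt_iff_isPLOn`. -/
structure IsPLOn (f : ℝ → ℝ) (a b : ℝ) : Prop where
  exists_hasSlopeR : ∀ x ∈ Ico a b, ∃ m, HasSlopeR f x m
  exists_hasSlopeL : ∀ x ∈ Ioc a b, ∃ m, HasSlopeL f x m

namespace IsPLOn

lemma mono (h : IsPLOn f a b) {a' b' : ℝ} (ha : a ≤ a') (hb : b' ≤ b) : IsPLOn f a' b' :=
  ⟨fun x hx => h.exists_hasSlopeR x ⟨ha.trans hx.1, hx.2.trans_le hb⟩,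
    fun x hx => h.exists_hasSlopeL x ⟨ha.trans_lt hx.1, hx.2.trans hb⟩⟩

lemma hasSlopeR (h : IsPLOn f a b) (hx : x ∈ Ico a b) : HasSlopeR f x (slopeR f x) := by
  obtain ⟨m, hm⟩ := h.exists_hasSlopeR x hx
  rwa [hm.slopeR_eq]

lemma hasSlopeL (h : IsPLOn f a b) (hx : x ∈ Ioc a b) : HasSlopeL f x (slopeL f x) := by
  obtain ⟨m, hm⟩ := h.exists_hasSlopeL x hx
  rwa [hm.slopeL_eq]

lemma add (hf : IsPLOn f a b) (hg : IsPLOn g a b) : IsPLOn (f + g) a b :=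
  ⟨fun _ hx => ⟨_, (hf.hasSlopeR hx).add (hg.hasSlopeR hx)⟩,
    fun _ hx => ⟨_, (hf.hasSlopeL hx).add (hg.hasSlopeL hx)⟩⟩

lemma neg (hf : IsPLOn f a b) : IsPLOn (-f) a b :=
  ⟨fun _ hx => ⟨_, (hf.hasSlopeR hx).neg⟩, fun _ hx => ⟨_, (hf.hasSlopeL hx).neg⟩⟩

lemma slopeR_add (hf : IsPLOn f a b) (hg : IsPLOn g a b) (hx : x ∈ Ico a b) :
    slopeR (f + g) x = slopeR f x + slopeR g x :=
  ((hf.hasSlopeR hx).add (hg.hasSlopeR hx)).slopeR_eq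

lemma slopeL_add (hf : IsPLOn f a b) (hg : IsPLOn g a b) (hx : x ∈ Ioc a b) :
    slopeL (f + g) x = slopeL f x + slopeL g x :=
  ((hf.hasSlopeL hx).add (hg.hasSlopeL hx)).slopeL_eq

lemma kink_add (hf : IsPLOn f a b) (hg : IsPLOn g a b) (hx : x ∈ Ioo a b) :
    kink (f + g) x = kink f x + kink g x := by
  rw [kink, hf.slopeR_add hg (Ioo_subset_Ico_self hx), hf.slopeL_add hg (Ioo_subset_Ioc_self hx),
    kink, kink, add_add_add_comm]

lemma slopeR_neg (hf : IsPLOn f a b) (hx : x ∈ Ico a b) : slopeR (-f) x = -slopeR f x :=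
  (hf.hasSlopeR hx).neg.slopeR_eq

lemma slopeL_neg (hf : IsPLOn f a b) (hx : x ∈ Ioc a b) : slopeL (-f) x = -slopeL f x :=
  (hf.hasSlopeL hx).neg.slopeL_eq

lemma kink_neg (hf : IsPLOn f a b) (hx : x ∈ Ioo a b) : kink (-f) x = -kink f x := by
  rw [kink, hf.slopeR_neg (Ioo_subset_Ico_self hx), hf.slopeL_neg (Ioo_subset_Ioc_self hx), kink,
    neg_add]

lemma exists_hasSlopeOn_left (h : IsPLOn f a b) (hx : x ∈ Ioc a b) :
    ∃ l < x, ∀ y ∈ Ioo l x, ∃ m, HasSlopeOn f m y x := by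
  obtain ⟨l, hl, hslope⟩ := mem_nhdsLT_iff_exists_Ico_subset.1 (h.hasSlopeL hx)
  refine ⟨l, hl, fun y hy => ⟨-slopeL f x, fun s hs => ?_⟩⟩
  have hfy : f y = f x + slopeL f x * (x - y) := hslope ⟨hy.1.le, hy.2⟩
  rcases hs.2.eq_or_lt with rfl | hsx
  · rw [hfy]
    push_cast
    ring
  · have hfs : f s = f x + slopeL f x * (x - s) := hslope ⟨hy.1.le.trans hs.1, hsx⟩
    rw [hfs, hfy]
    push_cast
    ring

lemma exists_hasSlopeOn_right (h : IsPLOn f a b) (hx : x ∈ Ico a b) :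
    ∃ z ∈ Ioc x b, ∃ m, HasSlopeOn f m x z := by
  obtain ⟨ε, hε, hslope⟩ := hasSlopeR_iff_exists_Icc.1 (h.hasSlopeR hx)
  exact ⟨min (x + ε) b, ⟨lt_min (lt_add_of_pos_right x hε) hx.2, min_le_right _ _⟩, _,
    fun s hs => hslope s ⟨hs.1, hs.2.trans (min_le_left _ _)⟩⟩

theorem induction (h : IsPLOn f a b) (hab : a ≤ b) {P : ℝ → Prop} (base : P a)
    (step : ∀ y z m, a ≤ y → y < z → z ≤ b → HasSlopeOn f m y z → P y → P z) : P b := by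
  set S : Set ℝ := {y ∈ Icc a b | P y}
  have haS : a ∈ S := ⟨left_mem_Icc.2 hab, base⟩
  have hbdd : BddAbove S := ⟨b, fun y hy => hy.1.2⟩
  have hac : a ≤ sSup S := le_csSup hbdd haS
  have hcb : sSup S ≤ b := csSup_le ⟨a, haS⟩ fun y hy => hy.1.2
  have hPc : P (sSup S) := by
    rcases hac.eq_or_lt with hac | hac
    · rwa [← hac]
    obtain ⟨l, hl, hleft⟩ := h.exists_hasSlopeOn_left ⟨hac, hcb⟩
    obtain ⟨y, hy, hly⟩ := exists_lt_of_lt_csSup ⟨a, haS⟩ hl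
    rcases (le_csSup hbdd hy).eq_or_lt with hyc | hyc
    · exact hyc ▸ hy.2
    · obtain ⟨m, hm⟩ := hleft y ⟨hly, hyc⟩
      exact step y _ m hy.1.1 hyc hcb hm hy.2
  rcases hcb.eq_or_lt with hcb | hcb
  · rwa [← hcb]
  obtain ⟨z, hz, m, hm⟩ := h.exists_hasSlopeOn_right ⟨hac, hcb⟩
  have hzS : z ∈ S := ⟨⟨hac.trans hz.1.le, hz.2⟩, step _ z m hac hz.1 hz.2 hm hPc⟩
  exact absurd (le_csSup hbdd hzS) (not_le.2 hz.1)

theorem exists_sum_kink_eq (h : IsPLOn f a b) (hab : a < b) :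
    ∃ T : Finset ℝ, (∀ s ∈ T, s ∈ Ioo a b) ∧ (∀ s ∈ Ioo a b, s ∉ T → kink f s = 0) ∧
      ∑ s ∈ T, kink f s = -(slopeR f a + slopeL f b) := by
  refine h.induction hab.le (P := fun z => a < z → ∃ T : Finset ℝ, (∀ s ∈ T, s ∈ Ioo a z) ∧
    (∀ s ∈ Ioo a z, s ∉ T → kink f s = 0) ∧ ∑ s ∈ T, kink f s = -(slopeR f a + slopeL f z))
    (fun haa => absurd haa (lt_irrefl a)) (fun y z m hay hyz _ hm ih _ => ?_) hab
  have hslopeR : slopeR f y = m := (hm.hasSlopeR ⟨le_rfl, hyz⟩).slopeR_eq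
  have hslopeL : slopeL f z = -m := (hm.hasSlopeL ⟨hyz, le_rfl⟩).slopeL_eq
  rcases hay.eq_or_lt with rfl | hay
  · exact ⟨∅, by simp, fun s hs _ => hm.kink_eq_zero hs, by simp [hslopeR, hslopeL]⟩
  obtain ⟨T, hT, hzero, hsum⟩ := ih hay
  refine ⟨insert y T, fun s hs => ?_, fun s hs hsT => ?_, ?_⟩
  · rcases Finset.mem_insert.1 hs with rfl | hs
    · exact ⟨hay, hyz⟩
    · exact ⟨(hT s hs).1, (hT s hs).2.trans hyz⟩
  · rw [Finset.mem_insert, not_or] at hsT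
    rcases lt_or_gt_of_ne hsT.1 with hsy | hys
    · exact hzero s ⟨hs.1, hsy⟩ hsT.2
    · exact hm.kink_eq_zero ⟨hys, hs.2⟩
  · rw [Finset.sum_insert fun hy => (hT y hy).2.false, hsum, kink, hslopeR, hslopeL]
    ring

lemma exists_slopeR_pos (h : IsPLOn f a b) (hab : a ≤ b) (hlt : f a < f b) :
    ∃ x ∈ Ico a b, 0 < slopeR f x := by
  by_contra! hnonpos
  refine hlt.not_ge (h.induction hab (P := fun z => f z ≤ f a) le_rfl ?_)
  intro y z m hay hyz hzb hm ih
  have hslope : (m : ℝ) ≤ 0 := by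
    rw [← (hm.hasSlopeR ⟨le_rfl, hyz⟩).slopeR_eq]
    exact_mod_cast hnonpos y ⟨hay, hyz.trans_le hzb⟩
  have hfz := hm z ⟨hyz.le, le_rfl⟩
  linarith [mul_nonpos_of_nonpos_of_nonneg hslope (sub_pos.2 hyz).le]

lemma exists_slopeL_pos (h : IsPLOn f a b) (hab : a ≤ b) (hlt : f b < f a) :
    ∃ x ∈ Ioc a b, 0 < slopeL f x := by
  by_contra! hnonpos
  refine hlt.not_ge (h.induction hab (P := fun z => f a ≤ f z) le_rfl ?_)
  intro y z m hay hyz hzb hm ih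
  have hslope : (0 : ℝ) ≤ m := by
    have hneg := hnonpos z ⟨hay.trans_lt hyz, hzb⟩
    rw [(hm.hasSlopeL ⟨hyz, le_rfl⟩).slopeL_eq] at hneg
    exact_mod_cast neg_nonpos.1 hneg
  have hfz := hm z ⟨hyz.le, le_rfl⟩
  linarith [mul_nonneg hslope (sub_pos.2 hyz).le]

end IsPLOn

lemma PLInt.isPLOn (h : PLInt f L) : IsPLOn f 0 L := by
  obtain ⟨n, t, h0, hL, -, hpiece⟩ := h
  refine ⟨fun x hx => ?_, fun x hx => ?_⟩
  · obtain ⟨i, hi⟩ : ∃ i : Fin n, x ∈ Ico (t i.castSucc) (t i.succ) := by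
      by_contra! hno
      have hle : ∀ i, t i ≤ x := fun i => Fin.induction (h0.trans_le hx.1)
        (fun i hi => not_lt.1 fun hlt => hno i ⟨hi, hlt⟩) i
      exact (hL ▸ hle (Fin.last n)).not_gt hx.2
    exact (hpiece i).imp fun m hm => HasSlopeOn.hasSlopeR hm hi
  · obtain ⟨i, hi⟩ : ∃ i : Fin n, x ∈ Ioc (t i.castSucc) (t i.succ) := by
      by_contra! hno
      have hlt : ∀ i, t i < x := fun i => Fin.induction (h0.trans_lt hx.1)
        (fun i hi => not_le.1 fun hle => hno i ⟨hi, hle⟩) i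
      exact (hL ▸ hlt (Fin.last n)).not_ge hx.2
    exact (hpiece i).elim fun m hm => ⟨-m, HasSlopeOn.hasSlopeL hm hi⟩

lemma PLInt.append (h : PLInt f a) (hab : a < b) (hm : HasSlopeOn f m a b) : PLInt f b := by
  obtain ⟨n, t, h0, ha, hmono, hpiece⟩ := h
  refine ⟨n + 1, Fin.snoc t b, ?_, Fin.snoc_last _ _, ?_, ?_⟩
  · rw [← Fin.castSucc_zero, Fin.snoc_castSucc, h0]
  · rw [Fin.strictMono_iff_lt_succ]
    intro i
    induction i using Fin.lastCases with
    | last => rwa [Fin.succ_last, Fin.snoc_last, Fin.snoc_castSucc, ha]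
    | cast i =>
      rw [Fin.succ_castSucc, Fin.snoc_castSucc, Fin.snoc_castSucc]
      exact hmono i.castSucc_lt_succ
  · intro i
    induction i using Fin.lastCases with
    | last => rw [Fin.succ_last, Fin.snoc_last, Fin.snoc_castSucc, ha]; exact ⟨m, hm⟩
    | cast i => rw [Fin.succ_castSucc, Fin.snoc_castSucc, Fin.snoc_castSucc]; exact hpiece i

lemma plInt_zero_right : PLInt f 0 :=
  ⟨0, fun _ => 0, rfl, rfl, fun i j hij => absurd hij (by omega), fun i => i.elim0⟩

theorem plInt_iff_isPLOn (hL : 0 ≤ L) : PLInt f L ↔ IsPLOn f 0 L :=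
  ⟨PLInt.isPLOn, fun h => h.induction hL plInt_zero_right
    fun _ _ _ _ hyz _ hm hy => hy.append hyz hm⟩

end PiecewiseLinear

variable {Γ : MetricGraphModel}

section RationalFunctions

open Set

lemma RationalFunction.isPLOn (f : RationalFunction Γ) (e : Γ.E) :
    IsPLOn (f.eFun e) 0 (Γ.len e) :=
  (f.pl e).isPLOn

noncomputable instance : Add (RationalFunction Γ) where
  add f g :=
    { vVal := f.vVal + g.vVal
      eFun := fun e => f.eFun e + g.eFun e
      pl := fun e => (plInt_iff_isPLOn (Γ.len_pos e).le).2 ((f.isPLOn e).add (g.isPLOn e))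
      srcVal := fun e => congrArg₂ (· + ·) (f.srcVal e) (g.srcVal e)
      tgtVal := fun e => congrArg₂ (· + ·) (f.tgtVal e) (g.tgtVal e) }

noncomputable instance : Neg (RationalFunction Γ) where
  neg f :=
    { vVal := -f.vVal
      eFun := fun e => -f.eFun e
      pl := fun e => (plInt_iff_isPLOn (Γ.len_pos e).le).2 (f.isPLOn e).neg
      srcVal := fun e => congrArg Neg.neg (f.srcVal e)
      tgtVal := fun e => congrArg Neg.neg (f.tgtVal e) }

lemma eFun_add (f g : RationalFunction Γ) (e : Γ.E) : (f + g).eFun e = f.eFun e + g.eFun e := rfl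

lemma eFun_neg (f : RationalFunction Γ) (e : Γ.E) : (-f).eFun e = -f.eFun e := rfl

lemma vVal_neg (f : RationalFunction Γ) (v : Γ.V) : (-f).vVal v = -f.vVal v := rfl

lemma ratDiv_inl (f : RationalFunction Γ) (v : Γ.V) :
    ratDiv f (Sum.inl v) = ∑ e : Γ.E, ((if Γ.src e = v then slopeR (f.eFun e) 0 else 0) +
      (if Γ.tgt e = v then slopeL (f.eFun e) (Γ.len e) else 0)) :=
  rfl

lemma ratDiv_inr (f : RationalFunction Γ) (e : Γ.E) (s : {t : ℝ // 0 < t ∧ t < Γ.len e}) :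
    ratDiv f (Sum.inr ⟨e, s⟩) = kink (f.eFun e) s :=
  rfl

lemma ratDiv_add (f g : RationalFunction Γ) : ratDiv (f + g) = ratDiv f + ratDiv g := by
  funext p
  rcases p with v | ⟨e, s⟩
  · simp only [Pi.add_apply, ratDiv_inl, ← Finset.sum_add_distrib, eFun_add]
    refine Finset.sum_congr rfl fun e _ => ?_
    rw [(f.isPLOn e).slopeR_add (g.isPLOn e) ⟨le_rfl, Γ.len_pos e⟩,
      (f.isPLOn e).slopeL_add (g.isPLOn e) ⟨Γ.len_pos e, le_rfl⟩]
    split_ifs <;> ring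
  · exact (f.isPLOn e).kink_add (g.isPLOn e) s.2

lemma ratDiv_neg (f : RationalFunction Γ) : ratDiv (-f) = -ratDiv f := by
  funext p
  rcases p with v | ⟨e, s⟩
  · simp only [Pi.neg_apply, ratDiv_inl, ← Finset.sum_neg_distrib, eFun_neg]
    refine Finset.sum_congr rfl fun e _ => ?_
    rw [(f.isPLOn e).slopeR_neg ⟨le_rfl, Γ.len_pos e⟩,
      (f.isPLOn e).slopeL_neg ⟨Γ.len_pos e, le_rfl⟩]
    split_ifs <;> ring
  · exact (f.isPLOn e).kink_neg s.2

lemma linEquiv_iff {D D' : Divisor Γ} : LinEquiv Γ D D' ↔ ∃ f, D = D' + ratDiv f :=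
  exists_congr fun _ => funext_iff.symm

lemma LinEquiv.symm {D D' : Divisor Γ} (h : LinEquiv Γ D D') : LinEquiv Γ D' D := by
  obtain ⟨f, rfl⟩ := linEquiv_iff.1 h
  exact linEquiv_iff.2 ⟨-f, by rw [ratDiv_neg, add_neg_cancel_right]⟩

lemma LinEquiv.trans {D D' D'' : Divisor Γ} (h : LinEquiv Γ D D') (h' : LinEquiv Γ D' D'') :
    LinEquiv Γ D D'' := by
  obtain ⟨f, rfl⟩ := linEquiv_iff.1 h
  obtain ⟨g, rfl⟩ := linEquiv_iff.1 h'
  exact linEquiv_iff.2 ⟨g + f, by rw [ratDiv_add, add_assoc]⟩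

lemma LinEquiv.add_left {D D' : Divisor Γ} (h : LinEquiv Γ D D') (C : Divisor Γ) :
    LinEquiv Γ (C + D) (C + D') := by
  obtain ⟨f, rfl⟩ := linEquiv_iff.1 h
  exact linEquiv_iff.2 ⟨f, (add_assoc C D' (ratDiv f)).symm⟩

end RationalFunctions

section Degrees

open Function

variable {D D' : Divisor Γ}

/-- The degree of the restriction of the divisor `D` to the interior of the edge `e`. -/
noncomputable def edgeDegree (D : Divisor Γ) (e : Γ.E) : ℤ :=
  ∑ᶠ s : {t : ℝ // 0 < t ∧ t < Γ.len e}, D (Sum.inr ⟨e, s⟩)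

lemma divFinSupp_iff :
    DivFinSupp D ↔ ∀ e, (support fun s => D (Sum.inr ⟨e, s⟩)).Finite := by
  refine ⟨fun h e => h.preimage (Sum.inr_injective.comp sigma_mk_injective).injOn, fun h => ?_⟩
  refine ((Set.finite_range (Sum.inl : Γ.V → Γ.Pt)).union
    (Set.finite_iUnion fun e => (h e).image fun s => Sum.inr ⟨e, s⟩)).subset ?_
  rintro (v | ⟨e, s⟩) hp
  · exact Or.inl ⟨v, rfl⟩
  · exact Or.inr (Set.mem_iUnion.2 ⟨e, s, hp, rfl⟩)

lemma divDegree_eq_sum_add_sum (hD : DivFinSupp D) :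
    divDegree D = ∑ v, D (Sum.inl v) + ∑ e, edgeDegree D e := by
  have hfin := divFinSupp_iff.1 hD
  have hsupp : support D ⊆
      (Finset.univ.disjSum (Finset.univ.sigma fun e => (hfin e).toFinset) : Finset Γ.Pt) := by
    rintro (v | ⟨e, s⟩) hp
    · simp
    · simpa using hp
  rw [divDegree, finsum_eq_sum_of_support_subset _ hsupp, Finset.sum_disjSum, Finset.sum_sigma]
  simp only [edgeDegree, finsum_eq_sum _ (hfin _)]

lemma edgeDegree_add (hD : DivFinSupp D) (hD' : DivFinSupp D') (e : Γ.E) :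
    edgeDegree (D + D') e = edgeDegree D e + edgeDegree D' e :=
  finsum_add_distrib (divFinSupp_iff.1 hD e) (divFinSupp_iff.1 hD' e)

lemma edgeDegree_nonneg (hD : DivEffective D) (e : Γ.E) : 0 ≤ edgeDegree D e :=
  finsum_nonneg fun _ => hD _

lemma DivFinSupp.add (hD : DivFinSupp D) (hD' : DivFinSupp D') : DivFinSupp (D + D') :=
  (hD.union hD').subset (support_add _ _)

lemma divDegree_add (hD : DivFinSupp D) (hD' : DivFinSupp D') :
    divDegree (D + D') = divDegree D + divDegree D' :=
  finsum_add_distrib hD hD'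

lemma DivEffective.add (hD : DivEffective D) (hD' : DivEffective D') : DivEffective (D + D') :=
  fun p => add_nonneg (hD p) (hD' p)

lemma divEffective_unitDiv (p : Γ.Pt) : DivEffective (unitDiv Γ p) := fun q => by
  unfold unitDiv
  split_ifs <;> simp

lemma support_unitDiv (p : Γ.Pt) : support (unitDiv Γ p) = {p} := by
  ext q
  simp [unitDiv]

lemma divFinSupp_unitDiv (p : Γ.Pt) : DivFinSupp (unitDiv Γ p) := by
  rw [DivFinSupp, support_unitDiv]
  exact Set.finite_singleton p

lemma divDegree_unitDiv (p : Γ.Pt) : divDegree (unitDiv Γ p) = 1 :=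
  (finsum_eq_single (unitDiv Γ p) p fun _ hq => if_neg hq).trans (if_pos rfl)

lemma edgeDegree_unitDiv_le_one (p : Γ.Pt) (e : Γ.E) : edgeDegree (unitDiv Γ p) e ≤ 1 := by
  have hsum := divDegree_eq_sum_add_sum (divFinSupp_unitDiv p)
  have hvertices := Finset.sum_nonneg fun v (_ : v ∈ Finset.univ) =>
    divEffective_unitDiv p (Sum.inl v)
  have hedge := Finset.single_le_sum (f := edgeDegree (unitDiv Γ p))
    (fun e _ => edgeDegree_nonneg (divEffective_unitDiv p) e) (Finset.mem_univ e)
  rw [divDegree_unitDiv] at hsum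
  linarith

lemma edgeDegree_unitDiv_eq_zero {p : Γ.Pt} {e : Γ.E} (h : ¬ interiorOf Γ e p) :
    edgeDegree (unitDiv Γ p) e = 0 :=
  finsum_eq_zero_of_forall_eq_zero fun s => if_neg fun hsp => h ⟨s, hsp.symm⟩

lemma edgeDegree_unitDiv_add_unitDiv_le_one {p q : Γ.Pt} (h : ¬ SameEdgeInterior Γ p q)
    (e : Γ.E) : edgeDegree (unitDiv Γ p + unitDiv Γ q) e ≤ 1 := by
  rw [edgeDegree_add (divFinSupp_unitDiv p) (divFinSupp_unitDiv q)]
  by_cases hp : interiorOf Γ e p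
  · rw [edgeDegree_unitDiv_eq_zero fun hq => h ⟨e, hp, hq⟩, add_zero]
    exact edgeDegree_unitDiv_le_one p e
  · rw [edgeDegree_unitDiv_eq_zero hp, zero_add]
    exact edgeDegree_unitDiv_le_one q e

lemma exists_eq_unitDiv_add_unitDiv (hD : DivEffective D) (hfin : DivFinSupp D)
    (hdeg : divDegree D = 2) : ∃ p q, D = unitDiv Γ p + unitDiv Γ q := by
  set F : Γ.Pt →₀ ℕ := Finsupp.onFinset hfin.toFinset (fun p => (D p).toNat) fun p hp =>
    hfin.mem_toFinset.2 fun hDp => hp (by rw [hDp, Int.toNat_zero])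
  have hF (p) : (F p : ℤ) = D p := Int.toNat_of_nonneg (hD p)
  have hcard : (Finsupp.toMultiset F).card = 2 := by
    rw [Finsupp.card_toMultiset, Finsupp.onFinset_sum _ fun _ => rfl]
    rw [divDegree, finsum_eq_sum D hfin] at hdeg
    zify
    exact (Finset.sum_congr rfl fun p _ => hF p).trans hdeg
  obtain ⟨p, q, hpq⟩ := Multiset.card_eq_two.1 hcard
  refine ⟨p, q, funext fun r => ?_⟩
  rw [← hF r, ← Finsupp.count_toMultiset, hpq, Multiset.insert_eq_cons, Multiset.count_cons,
    Multiset.count_singleton, add_comm]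
  push_cast
  rfl

lemma divFinSupp_ratDiv (f : RationalFunction Γ) : DivFinSupp (ratDiv f) := by
  refine divFinSupp_iff.2 fun e => ?_
  obtain ⟨T, -, hzero, -⟩ := (f.isPLOn e).exists_sum_kink_eq (Γ.len_pos e)
  refine (T.finite_toSet.preimage Subtype.val_injective.injOn).subset fun s hs => ?_
  by_contra hsT
  exact hs (hzero s s.2 hsT)

lemma edgeDegree_ratDiv (f : RationalFunction Γ) (e : Γ.E) :
    edgeDegree (ratDiv f) e = -(slopeR (f.eFun e) 0 + slopeL (f.eFun e) (Γ.len e)) := by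
  obtain ⟨T, hT, hzero, hsum⟩ := (f.isPLOn e).exists_sum_kink_eq (Γ.len_pos e)
  rw [← hsum]
  refine (finsum_set_coe_eq_finsum_mem (f := kink (f.eFun e)) (Set.Ioo 0 (Γ.len e))).trans
    (finsum_mem_eq_sum_of_inter_support_eq _ ?_)
  ext s
  exact and_congr_left fun hs => ⟨fun hsI => by_contra fun hsT => hs (hzero s hsI hsT), hT s⟩

lemma sum_ratDiv_inl (f : RationalFunction Γ) (A : Finset Γ.V) :
    ∑ v ∈ A, ratDiv f (Sum.inl v) = ∑ e, ((if Γ.src e ∈ A then slopeR (f.eFun e) 0 else 0) +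
      (if Γ.tgt e ∈ A then slopeL (f.eFun e) (Γ.len e) else 0)) := by
  simp only [ratDiv_inl]
  rw [Finset.sum_comm]
  simp only [Finset.sum_add_distrib, Finset.sum_ite_eq]

lemma divDegree_ratDiv (f : RationalFunction Γ) : divDegree (ratDiv f) = 0 := by
  rw [divDegree_eq_sum_add_sum (divFinSupp_ratDiv f), sum_ratDiv_inl, ← Finset.sum_add_distrib]
  refine Finset.sum_eq_zero fun e _ => ?_
  rw [if_pos (Finset.mem_univ _), if_pos (Finset.mem_univ _), edgeDegree_ratDiv, add_neg_cancel]

lemma LinEquiv.divDegree_eq (h : LinEquiv Γ D D') (hD' : DivFinSupp D') :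
    divDegree D = divDegree D' := by
  obtain ⟨f, rfl⟩ := linEquiv_iff.1 h
  rw [divDegree_add hD' (divFinSupp_ratDiv f), divDegree_ratDiv, add_zero]

end Degrees

section Cuts

/-- The edges of `Γ` with exactly one endpoint in `A`. -/
noncomputable def edgeCut (Γ : MetricGraphModel) (A : Finset Γ.V) : Finset Γ.E :=
  {e | ¬ (Γ.src e ∈ A ↔ Γ.tgt e ∈ A)}

lemma mem_edgeCut {A : Finset Γ.V} {e : Γ.E} :
    e ∈ edgeCut Γ A ↔ ¬ (Γ.src e ∈ A ↔ Γ.tgt e ∈ A) := by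
  simp [edgeCut]

lemma IsWalk.exists_mem_edgeCut {A : Finset Γ.V} {W : List (Γ.E × Bool)} {u v : Γ.V}
    (h : IsWalk Γ W u v) (hu : u ∈ A) (hv : v ∉ A) : ∃ x ∈ W, x.1 ∈ edgeCut Γ A := by
  induction W generalizing u with
  | nil => exact absurd (h ▸ hu) hv
  | cons x W ih =>
    obtain ⟨rfl, hW⟩ := h
    by_cases htgt : Γ.dTgt x ∈ A
    · obtain ⟨y, hyW, hy⟩ := ih hW htgt
      exact ⟨y, List.mem_cons_of_mem _ hyW, hy⟩
    · refine ⟨x, List.mem_cons_self, mem_edgeCut.2 ?_⟩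
      unfold dSrc at hu
      unfold dTgt at htgt
      split_ifs at hu htgt <;> tauto

lemma ThreeEdgeConnected.three_le_card_edgeCut (h : Γ.ThreeEdgeConnected) {A : Finset Γ.V}
    {u v : Γ.V} (hu : u ∈ A) (hv : v ∉ A) : 3 ≤ (edgeCut Γ A).card := by
  by_contra! hlt
  obtain ⟨W, hW, hdisj⟩ := h (edgeCut Γ A) (Nat.le_of_lt_succ hlt) u v
  obtain ⟨x, hxW, hx⟩ := hW.exists_mem_edgeCut hu hv
  exact hdisj x hxW hx

end Cuts

section Uniqueness

open Set

variable {D : Divisor Γ} {h : RationalFunction Γ}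

lemma sum_le_edgeDegree (hfin : DivFinSupp D) (hD : DivEffective D) (e : Γ.E)
    (T : Finset {t : ℝ // 0 < t ∧ t < Γ.len e}) :
    ∑ s ∈ T, D (Sum.inr ⟨e, s⟩) ≤ edgeDegree D e := by
  have hfin_e := divFinSupp_iff.1 hfin e
  rw [edgeDegree, finsum_eq_sum_of_support_subset (s := hfin_e.toFinset ∪ T) _
    (fun s hs => Finset.mem_coe.2 (Finset.mem_union_left _ (hfin_e.mem_toFinset.2 hs)))]
  exact Finset.sum_le_sum_of_subset_of_nonneg Finset.subset_union_right fun s _ _ => hD _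

lemma slopeR_add_slopeL_le_edgeDegree (hfin : DivFinSupp D) (hD : DivEffective D)
    (hDh : DivEffective (D + ratDiv h)) {e : Γ.E} {a b : ℝ} (ha : 0 ≤ a) (hab : a < b)
    (hb : b ≤ Γ.len e) : slopeR (h.eFun e) a + slopeL (h.eFun e) b ≤ edgeDegree D e := by
  obtain ⟨T, hT, -, hsum⟩ := ((h.isPLOn e).mono ha hb).exists_sum_kink_eq hab
  have hTe : ∀ s ∈ T, 0 < s ∧ s < Γ.len e := fun s hs =>
    ⟨ha.trans_lt (hT s hs).1, (hT s hs).2.trans_le hb⟩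
  have hkink : ∀ s : {t : ℝ // 0 < t ∧ t < Γ.len e}, -kink (h.eFun e) s ≤ D (Sum.inr ⟨e, s⟩) :=
    fun s => neg_le_iff_add_nonneg.2 (hDh (Sum.inr ⟨e, s⟩))
  calc slopeR (h.eFun e) a + slopeL (h.eFun e) b
      = ∑ s ∈ T.subtype fun s => 0 < s ∧ s < Γ.len e, -kink (h.eFun e) s := by
        rw [Finset.sum_subtype_of_mem (fun s => -kink (h.eFun e) s) hTe, Finset.sum_neg_distrib,
          hsum, neg_neg]
    _ ≤ ∑ s ∈ T.subtype fun s => 0 < s ∧ s < Γ.len e, D (Sum.inr ⟨e, s⟩) :=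
        Finset.sum_le_sum fun s _ => hkink s
    _ ≤ edgeDegree D e := sum_le_edgeDegree hfin hD e _

lemma edge_outflow_le (hfin : DivFinSupp D) (hD : DivEffective D)
    (hDh : DivEffective (D + ratDiv h)) {A : Finset Γ.V}
    (hA : ∀ v ∈ A, ∀ w ∉ A, h.vVal w < h.vVal v) (e : Γ.E) :
    (if Γ.src e ∈ A then slopeR (h.eFun e) 0 else 0) +
        (if Γ.tgt e ∈ A then slopeL (h.eFun e) (Γ.len e) else 0) ≤
      edgeDegree D e - if e ∈ edgeCut Γ A then 1 else 0 := by
  have hlen := Γ.len_pos e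
  simp only [mem_edgeCut]
  by_cases hsrc : Γ.src e ∈ A <;> by_cases htgt : Γ.tgt e ∈ A
  · simpa [hsrc, htgt] using slopeR_add_slopeL_le_edgeDegree hfin hD hDh le_rfl hlen le_rfl
  · obtain ⟨c, hc, hpos⟩ := (h.isPLOn e).exists_slopeL_pos hlen.le
      (by rw [h.srcVal, h.tgtVal]; exact hA _ hsrc _ htgt)
    have hbend := slopeR_add_slopeL_le_edgeDegree hfin hD hDh le_rfl hc.1 hc.2
    simp only [hsrc, htgt, if_true, if_false, iff_false, not_true, not_false_eq_true]
    linarith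
  · obtain ⟨c, hc, hpos⟩ := (h.isPLOn e).exists_slopeR_pos hlen.le
      (by rw [h.srcVal, h.tgtVal]; exact hA _ htgt _ hsrc)
    have hbend := slopeR_add_slopeL_le_edgeDegree hfin hD hDh hc.1 hc.2 le_rfl
    simp only [hsrc, htgt, if_true, if_false, iff_true, not_false_eq_true]
    linarith
  · simpa [hsrc, htgt] using edgeDegree_nonneg hD e

lemma card_edgeCut_le_divDegree (hfin : DivFinSupp D) (hD : DivEffective D)
    (hDh : DivEffective (D + ratDiv h)) {A : Finset Γ.V}
    (hA : ∀ v ∈ A, ∀ w ∉ A, h.vVal w < h.vVal v) : ((edgeCut Γ A).card : ℤ) ≤ divDegree D := by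
  have hlower : -∑ v ∈ A, D (Sum.inl v) ≤ ∑ v ∈ A, ratDiv h (Sum.inl v) := by
    rw [neg_le_iff_add_nonneg', ← Finset.sum_add_distrib]
    exact Finset.sum_nonneg fun v _ => hDh (Sum.inl v)
  have hupper := Finset.sum_le_sum fun e (_ : e ∈ Finset.univ) => edge_outflow_le hfin hD hDh hA e
  rw [← sum_ratDiv_inl, Finset.sum_sub_distrib, Finset.sum_boole, Finset.filter_mem_eq_inter,
    Finset.univ_inter] at hupper
  have hsubset : ∑ v ∈ A, D (Sum.inl v) ≤ ∑ v, D (Sum.inl v) :=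
    Finset.sum_le_sum_of_subset_of_nonneg (Finset.subset_univ A) fun v _ _ => hD _
  rw [divDegree_eq_sum_add_sum hfin]
  linarith

lemma vVal_eq_vVal (h3 : Γ.ThreeEdgeConnected) (hfin : DivFinSupp D) (hD : DivEffective D)
    (hdeg : divDegree D ≤ 2) (hDh : DivEffective (D + ratDiv h)) (u v : Γ.V) :
    h.vVal u = h.vVal v := by
  wlog huv : h.vVal u < h.vVal v generalizing u v
  · by_contra hne
    exact hne (this v u ((not_lt.1 huv).lt_of_ne' hne)).symm
  have hcut := card_edgeCut_le_divDegree hfin hD hDh (A := {w | h.vVal v ≤ h.vVal w}) (by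
    simp only [Finset.mem_filter_univ, not_le]
    exact fun w hw w' hw' => hw'.trans_le hw)
  have hthree := h3.three_le_card_edgeCut (A := {w | h.vVal v ≤ h.vVal w}) (u := v) (v := u)
    (by simp) (by simpa using huv)
  omega

lemma eFun_le_vVal (hfin : DivFinSupp D) (hD : DivEffective D)
    (hDh : DivEffective (D + ratDiv h)) {e : Γ.E} (hdeg : edgeDegree D e ≤ 1)
    (hconst : h.vVal (Γ.src e) = h.vVal (Γ.tgt e)) {c : ℝ} (hc : c ∈ Icc 0 (Γ.len e)) :
    h.eFun e c ≤ h.vVal (Γ.src e) := by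
  by_contra! hlt
  obtain ⟨a, ha, hapos⟩ := ((h.isPLOn e).mono le_rfl hc.2).exists_slopeR_pos hc.1
    (by rwa [h.srcVal])
  obtain ⟨b, hb, hbpos⟩ := ((h.isPLOn e).mono hc.1 le_rfl).exists_slopeL_pos hc.2
    (by rwa [h.tgtVal, ← hconst])
  have hbend := slopeR_add_slopeL_le_edgeDegree hfin hD hDh ha.1 (ha.2.trans hb.1) hb.2
  omega

lemma ratDiv_eq_zero_of_hasSlopeOn (hslope : ∀ e, HasSlopeOn (h.eFun e) 0 0 (Γ.len e)) :
    ratDiv h = 0 := by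
  funext p
  rcases p with v | ⟨e, s⟩
  · refine Finset.sum_eq_zero fun e _ => ?_
    rw [((hslope e).hasSlopeR ⟨le_rfl, Γ.len_pos e⟩).slopeR_eq,
      ((hslope e).hasSlopeL ⟨Γ.len_pos e, le_rfl⟩).slopeL_eq, neg_zero, ite_self, ite_self,
      add_zero]
  · exact (hslope e).kink_eq_zero s.2

theorem ratDiv_eq_zero (h3 : Γ.ThreeEdgeConnected) (hfin : DivFinSupp D) (hD : DivEffective D)
    (hdeg : divDegree D ≤ 2) (hedge : ∀ e, edgeDegree D e ≤ 1)
    (hDh : DivEffective (D + ratDiv h)) (hedge' : ∀ e, edgeDegree (D + ratDiv h) e ≤ 1) :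
    ratDiv h = 0 := by
  have hconst := vVal_eq_vVal h3 hfin hD hdeg hDh
  have hfin' : DivFinSupp (D + ratDiv h) := hfin.add (divFinSupp_ratDiv h)
  have hback : DivEffective (D + ratDiv h + ratDiv (-h)) := by
    rwa [ratDiv_neg, add_neg_cancel_right]
  refine ratDiv_eq_zero_of_hasSlopeOn fun e s hs => ?_
  have hle := eFun_le_vVal hfin hD hDh (hedge e) (hconst _ _) hs
  have hge := eFun_le_vVal hfin' hDh hback (hedge' e) (congrArg Neg.neg (hconst _ _)) hs
  rw [eFun_neg, vVal_neg, Pi.neg_apply, neg_le_neg_iff] at hge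
  rw [Int.cast_zero, zero_mul, add_zero, h.srcVal]
  exact hle.antisymm hge

end Uniqueness

end MetricGraphModel

section AdmissibleRepUnique

variable {Γ : MetricGraphModel} {D Dx Dx' : Divisor Γ} {x : Γ.V}

lemma admissibleRep_iff :
    AdmissibleRep Γ D x Dx ↔ LinEquiv Γ D Dx ∧ ∃ p q,
      Dx = unitDiv Γ (Sum.inl x) + (unitDiv Γ p + unitDiv Γ q) ∧ ¬ SameEdgeInterior Γ p q := by
  simp only [← add_assoc]
  rfl

theorem AdmissibleRep.unique (h3 : Γ.ThreeEdgeConnected) (h : AdmissibleRep Γ D x Dx)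
    (h' : AdmissibleRep Γ D x Dx') : Dx = Dx' := by
  obtain ⟨hDx, p, q, rfl, hpq⟩ := admissibleRep_iff.1 h
  obtain ⟨hDx', p', q', rfl, hpq'⟩ := admissibleRep_iff.1 h'
  obtain ⟨f, hf⟩ := linEquiv_iff.1 (hDx'.symm.trans hDx)
  rw [add_assoc, add_right_inj] at hf
  have hp := divFinSupp_unitDiv p
  have hq := divFinSupp_unitDiv q
  have hzero : ratDiv f = 0 := ratDiv_eq_zero h3 (hp.add hq)
    ((divEffective_unitDiv p).add (divEffective_unitDiv q))
    (by rw [divDegree_add hp hq, divDegree_unitDiv, divDegree_unitDiv]; norm_num)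
    (edgeDegree_unitDiv_add_unitDiv_le_one hpq)
    (hf ▸ (divEffective_unitDiv p').add (divEffective_unitDiv q'))
    (hf ▸ edgeDegree_unitDiv_add_unitDiv_le_one hpq')
  rw [hf, hzero, add_zero]

end AdmissibleRepUnique

namespace MetricGraphModel

variable {Γ : MetricGraphModel}

section Hinge

variable {c d L : ℝ}

/-- The function that vanishes up to `c` and has slope `1` from there on. -/
noncomputable def hinge (c s : ℝ) : ℝ := max 0 (s - c)

lemma hinge_of_le {s : ℝ} (h : s ≤ c) : hinge c s = 0 := max_eq_left (sub_nonpos.2 h)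

lemma hinge_of_ge {s : ℝ} (h : c ≤ s) : hinge c s = s - c := max_eq_right (sub_nonneg.2 h)

lemma hasSlopeR_hinge (c x : ℝ) : HasSlopeR (hinge c) x (if c ≤ x then 1 else 0) := by
  split_ifs with hcx
  · filter_upwards [self_mem_nhdsWithin] with s (hs : x < s)
    rw [hinge_of_ge (hcx.trans hs.le), hinge_of_ge hcx]
    push_cast
    ring
  · filter_upwards [Ioo_mem_nhdsGT (not_le.1 hcx)] with s hs
    rw [hinge_of_le hs.2.le, hinge_of_le (not_le.1 hcx).le, Int.cast_zero, zero_mul, add_zero]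

lemma hasSlopeL_hinge (c x : ℝ) : HasSlopeL (hinge c) x (if c < x then -1 else 0) := by
  split_ifs with hcx
  · filter_upwards [Ioo_mem_nhdsLT hcx] with s hs
    rw [hinge_of_ge hs.1.le, hinge_of_ge hcx.le]
    push_cast
    ring
  · filter_upwards [self_mem_nhdsWithin] with s (hs : s < x)
    rw [hinge_of_le (hs.le.trans (not_lt.1 hcx)), hinge_of_le (not_lt.1 hcx), Int.cast_zero,
      zero_mul, add_zero]

lemma hasSlopeR_zero (x : ℝ) : HasSlopeR 0 x 0 := .of_forall fun s => by simp

lemma hasSlopeL_zero (x : ℝ) : HasSlopeL 0 x 0 := .of_forall fun s => by simp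

lemma isPLOn_zero (a b : ℝ) : IsPLOn 0 a b :=
  ⟨fun x _ => ⟨0, hasSlopeR_zero x⟩, fun x _ => ⟨0, hasSlopeL_zero x⟩⟩

lemma isPLOn_hinge (c a b : ℝ) : IsPLOn (hinge c) a b :=
  ⟨fun x _ => ⟨_, hasSlopeR_hinge c x⟩, fun x _ => ⟨_, hasSlopeL_hinge c x⟩⟩

lemma slopeR_hinge_zero (hc : 0 ≤ c) : slopeR (hinge c) 0 = (Pi.single c 1 : ℝ → ℤ) 0 := by
  rw [(hasSlopeR_hinge c 0).slopeR_eq, Pi.single_apply]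
  exact if_congr ⟨fun h => hc.antisymm h, fun h => h.ge⟩ rfl rfl

lemma slopeL_hinge (hc : c ≤ L) : slopeL (hinge c) L = (Pi.single c 1 : ℝ → ℤ) L - 1 := by
  rw [(hasSlopeL_hinge c L).slopeL_eq, Pi.single_apply]
  rcases hc.eq_or_lt with rfl | hcL
  · simp
  · simp [hcL, hcL.ne']

lemma kink_hinge (c s : ℝ) : kink (hinge c) s = (Pi.single c 1 : ℝ → ℤ) s := by
  rw [kink, (hasSlopeR_hinge c s).slopeR_eq, (hasSlopeL_hinge c s).slopeL_eq, Pi.single_apply]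
  rcases lt_trichotomy c s with h | rfl | h
  · simp [h, h.le, h.ne']
  · simp
  · simp [h.not_ge, h.not_gt, h.ne]

lemma isPLOn_hinge_add_hinge (c d a b : ℝ) : IsPLOn (hinge c + hinge d) a b :=
  (isPLOn_hinge c a b).add (isPLOn_hinge d a b)

lemma slopeR_hinge_add_hinge_zero (hc : 0 ≤ c) (hd : 0 ≤ d) :
    slopeR (hinge c + hinge d) 0 = (Pi.single c 1 + Pi.single d 1 : ℝ → ℤ) 0 := by
  rw [(isPLOn_hinge c 0 1).slopeR_add (isPLOn_hinge d 0 1) ⟨le_rfl, one_pos⟩,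
    slopeR_hinge_zero hc, slopeR_hinge_zero hd, Pi.add_apply]

lemma slopeL_hinge_add_hinge (hc : c ≤ L) (hd : d ≤ L) :
    slopeL (hinge c + hinge d) L = (Pi.single c 1 + Pi.single d 1 : ℝ → ℤ) L - 2 := by
  rw [(isPLOn_hinge c (L - 1) L).slopeL_add (isPLOn_hinge d _ _) ⟨sub_one_lt L, le_rfl⟩,
    slopeL_hinge hc, slopeL_hinge hd, Pi.add_apply]
  ring

lemma kink_hinge_add_hinge (c d s : ℝ) :
    kink (hinge c + hinge d) s = (Pi.single c 1 + Pi.single d 1 : ℝ → ℤ) s := by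
  rw [(isPLOn_hinge c (s - 1) (s + 1)).kink_add (isPLOn_hinge d _ _)
    ⟨sub_one_lt s, lt_add_one s⟩, kink_hinge, kink_hinge, Pi.add_apply]

end Hinge

section Sliding

open Set

variable {e : Γ.E} {a b a' b' s : ℝ}

/-- The point of the closed edge `e` at distance `s` from its source, where a value of `s` outside
`[0, Γ.len e]` is replaced by the nearest endpoint. -/
noncomputable def ptAt (Γ : MetricGraphModel) (e : Γ.E) (s : ℝ) : Γ.Pt :=
  if h : 0 < s ∧ s < Γ.len e then Sum.inr ⟨e, s, h⟩
  else if s ≤ 0 then Sum.inl (Γ.src e) else Sum.inl (Γ.tgt e)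

lemma ptAt_of_mem_Ioo (h : s ∈ Ioo 0 (Γ.len e)) : ptAt Γ e s = Sum.inr ⟨e, s, h⟩ := dif_pos h

@[simp]
lemma ptAt_zero (e : Γ.E) : ptAt Γ e 0 = Sum.inl (Γ.src e) := by simp [ptAt]

@[simp]
lemma ptAt_len (e : Γ.E) : ptAt Γ e (Γ.len e) = Sum.inl (Γ.tgt e) := by
  simp [ptAt, Γ.len_pos e]

/-- The pushforward to `Γ` of the divisor on the segment `[0, Γ.len e]` with coefficients `w`;
values of `w` outside the segment are ignored. -/
noncomputable def edgeDiv (e : Γ.E) : (ℝ → ℤ) →+ Divisor Γ where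
  toFun w
    | Sum.inl v => (if Γ.src e = v then w 0 else 0) + (if Γ.tgt e = v then w (Γ.len e) else 0)
    | Sum.inr ⟨e', s⟩ => if e' = e then w s else 0
  map_zero' := by
    funext p
    rcases p with v | ⟨e', s⟩ <;> simp
  map_add' w w' := by
    funext p
    rcases p with v | ⟨e', s⟩ <;> simp only [Pi.add_apply] <;> split_ifs <;> ring

lemma edgeDiv_inl (w : ℝ → ℤ) (v : Γ.V) : edgeDiv e w (Sum.inl v) =
    (if Γ.src e = v then w 0 else 0) + (if Γ.tgt e = v then w (Γ.len e) else 0) :=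
  rfl

lemma edgeDiv_inr (w : ℝ → ℤ) (e' : Γ.E) (s : {t : ℝ // 0 < t ∧ t < Γ.len e'}) :
    edgeDiv e w (Sum.inr ⟨e', s⟩) = if e' = e then w s else 0 :=
  rfl

lemma unitDiv_ptAt (hs : s ∈ Icc 0 (Γ.len e)) :
    unitDiv Γ (ptAt Γ e s) = edgeDiv e (Pi.single s 1) := by
  have hlen := Γ.len_pos e
  funext p
  rcases hs.1.eq_or_lt with rfl | h0
  · rcases p with v | ⟨e', t, ht⟩
    · simp [unitDiv, edgeDiv_inl, hlen.ne', eq_comm]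
    · simp [unitDiv, edgeDiv_inr, ht.1.ne']
  rcases hs.2.eq_or_lt with rfl | hL
  · rcases p with v | ⟨e', t, ht⟩
    · simp [unitDiv, edgeDiv_inl, hlen.ne, eq_comm]
    · have hne : e' = e → t ≠ Γ.len e := by
        rintro rfl
        exact ht.2.ne
      simpa [unitDiv, edgeDiv_inr, Pi.single_apply] using hne
  · rw [ptAt_of_mem_Ioo ⟨h0, hL⟩]
    rcases p with v | ⟨e', t, ht⟩
    · simp [unitDiv, edgeDiv_inl, h0.ne, hL.ne']
    · rw [edgeDiv_inr, unitDiv]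
      by_cases he : e' = e
      · subst he
        simp [Pi.single_apply]
      · simp [he]

/-- The rational function that is `f` along the edge `e` and vanishes everywhere else. -/
noncomputable def edgeFunction (e : Γ.E) (f : ℝ → ℝ) (hf : IsPLOn f 0 (Γ.len e)) (h0 : f 0 = 0)
    (hL : f (Γ.len e) = 0) : RationalFunction Γ where
  vVal := 0
  eFun := Pi.single e f
  pl e' := by
    rcases eq_or_ne e' e with rfl | he
    · rw [Pi.single_eq_same]
      exact (plInt_iff_isPLOn (Γ.len_pos _).le).2 hf
    · rw [Pi.single_eq_of_ne he]
      exact (plInt_iff_isPLOn (Γ.len_pos _).le).2 (isPLOn_zero _ _)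
  srcVal e' := by
    rcases eq_or_ne e' e with rfl | he
    · rwa [Pi.single_eq_same]
    · rw [Pi.single_eq_of_ne he]
      rfl
  tgtVal e' := by
    rcases eq_or_ne e' e with rfl | he
    · rwa [Pi.single_eq_same]
    · rw [Pi.single_eq_of_ne he]
      rfl

lemma ratDiv_edgeFunction {f : ℝ → ℝ} (hf : IsPLOn f 0 (Γ.len e)) (h0 : f 0 = 0)
    (hL : f (Γ.len e) = 0) {w : ℝ → ℤ} (hw0 : slopeR f 0 = w 0)
    (hwL : slopeL f (Γ.len e) = w (Γ.len e)) (hw : ∀ s ∈ Ioo 0 (Γ.len e), kink f s = w s) :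
    ratDiv (edgeFunction e f hf h0 hL) = edgeDiv e w := by
  have heFun (e') : (edgeFunction e f hf h0 hL).eFun e' =
      (Pi.single e f : Γ.E → ℝ → ℝ) e' := rfl
  funext p
  rcases p with v | ⟨e', s⟩
  · rw [ratDiv_inl, Finset.sum_eq_single_of_mem e (Finset.mem_univ e), heFun, Pi.single_eq_same,
      hw0, hwL, edgeDiv_inl]
    intro e' _ he
    rw [heFun, Pi.single_eq_of_ne he, (hasSlopeR_zero _).slopeR_eq, (hasSlopeL_zero _).slopeL_eq,
      ite_self, ite_self, add_zero]
  · rw [ratDiv_inr, heFun, edgeDiv_inr]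
    split_ifs with he
    · subst he
      rw [Pi.single_eq_same, hw s s.2]
    · rw [Pi.single_eq_of_ne he, kink, (hasSlopeR_zero _).slopeR_eq,
        (hasSlopeL_zero _).slopeL_eq, add_zero]

/-- The witness is the piecewise linear function that bends up at `a`, `b` and down at `a'`, `b'`;
preservation of the sum of the positions makes it vanish at both ends of `e`. -/
theorem linEquiv_slide (ha : a ∈ Icc 0 (Γ.len e)) (hb : b ∈ Icc 0 (Γ.len e))
    (ha' : a' ∈ Icc 0 (Γ.len e)) (hb' : b' ∈ Icc 0 (Γ.len e)) (hsum : a + b = a' + b') :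
    LinEquiv Γ (unitDiv Γ (ptAt Γ e a) + unitDiv Γ (ptAt Γ e b))
      (unitDiv Γ (ptAt Γ e a') + unitDiv Γ (ptAt Γ e b')) := by
  have hlen := Γ.len_pos e
  have hpl := isPLOn_hinge_add_hinge a b 0 (Γ.len e)
  have hpl' := isPLOn_hinge_add_hinge a' b' 0 (Γ.len e)
  have h0 : (hinge a + hinge b + -(hinge a' + hinge b')) 0 = 0 := by
    simp [hinge_of_le ha.1, hinge_of_le hb.1, hinge_of_le ha'.1, hinge_of_le hb'.1]
  have hL : (hinge a + hinge b + -(hinge a' + hinge b')) (Γ.len e) = 0 := by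
    simp only [Pi.add_apply, Pi.neg_apply, hinge_of_ge ha.2, hinge_of_ge hb.2, hinge_of_ge ha'.2,
      hinge_of_ge hb'.2]
    linarith
  have hdiv := ratDiv_edgeFunction (hpl.add hpl'.neg) h0 hL
    (w := Pi.single a 1 + Pi.single b 1 - (Pi.single a' 1 + Pi.single b' 1))
    (by rw [hpl.slopeR_add hpl'.neg ⟨le_rfl, hlen⟩, hpl'.slopeR_neg ⟨le_rfl, hlen⟩,
          slopeR_hinge_add_hinge_zero ha.1 hb.1, slopeR_hinge_add_hinge_zero ha'.1 hb'.1,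
          ← sub_eq_add_neg, Pi.sub_apply])
    (by rw [hpl.slopeL_add hpl'.neg ⟨hlen, le_rfl⟩, hpl'.slopeL_neg ⟨hlen, le_rfl⟩,
          slopeL_hinge_add_hinge ha.2 hb.2, slopeL_hinge_add_hinge ha'.2 hb'.2, Pi.sub_apply]
        ring)
    (fun s hs => by rw [hpl.kink_add hpl'.neg hs, hpl'.kink_neg hs, kink_hinge_add_hinge,
          kink_hinge_add_hinge, ← sub_eq_add_neg, Pi.sub_apply])
  refine linEquiv_iff.2 ⟨edgeFunction e _ (hpl.add hpl'.neg) h0 hL, ?_⟩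
  rw [hdiv, unitDiv_ptAt ha, unitDiv_ptAt hb, unitDiv_ptAt ha', unitDiv_ptAt hb', map_sub, map_add,
    map_add, add_sub_cancel]

lemma not_sameEdgeInterior_inl_left (v : Γ.V) (q : Γ.Pt) :
    ¬ SameEdgeInterior Γ (Sum.inl v) q :=
  fun ⟨_, ⟨_, h⟩, _⟩ => Sum.inl_ne_inr h

lemma exists_linEquiv_inl_add_of_sameEdgeInterior {p q : Γ.Pt} (h : SameEdgeInterior Γ p q) :
    ∃ (v : Γ.V) (q' : Γ.Pt), LinEquiv Γ (unitDiv Γ p + unitDiv Γ q)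
      (unitDiv Γ (Sum.inl v) + unitDiv Γ q') := by
  obtain ⟨e, ⟨⟨a, ha⟩, rfl⟩, ⟨b, hb⟩, rfl⟩ := h
  rw [← ptAt_of_mem_Ioo ha, ← ptAt_of_mem_Ioo hb]
  have hlen := (Γ.len_pos e).le
  rcases le_total (a + b) (Γ.len e) with hab | hab
  · refine ⟨Γ.src e, ptAt Γ e (a + b), ?_⟩
    rw [← ptAt_zero]
    exact linEquiv_slide (Ioo_subset_Icc_self ha) (Ioo_subset_Icc_self hb)
      (left_mem_Icc.2 hlen) ⟨(add_pos ha.1 hb.1).le, hab⟩ (zero_add _).symm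
  · refine ⟨Γ.tgt e, ptAt Γ e (a + b - Γ.len e), ?_⟩
    rw [← ptAt_len]
    exact linEquiv_slide (Ioo_subset_Icc_self ha) (Ioo_subset_Icc_self hb)
      (right_mem_Icc.2 hlen) ⟨sub_nonneg.2 hab, by linarith [ha.2, hb.2]⟩ (by ring)

end Sliding

end MetricGraphModel

theorem exists_admissibleRep {Γ : MetricGraphModel} {D : Divisor Γ} (hdeg : divDegree D = 3)
    (hrk : RankGE Γ D 1) (x : Γ.V) : ∃ Dx, AdmissibleRep Γ D x Dx := by
  obtain ⟨B, hB, hBfin, hDB⟩ := hrk _ (divEffective_unitDiv (Sum.inl x))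
    (divFinSupp_unitDiv _) (divDegree_unitDiv _)
  have hx := divFinSupp_unitDiv (Γ := Γ) (Sum.inl x)
  have hDxB : LinEquiv Γ D (unitDiv Γ (Sum.inl x) + B) := by
    simpa only [Pi.add_def, add_sub_cancel] using hDB.add_left (unitDiv Γ (Sum.inl x))
  have hBdeg : divDegree B = 2 := by
    have := hDxB.divDegree_eq (hx.add hBfin)
    rw [divDegree_add hx hBfin, divDegree_unitDiv] at this
    linarith
  obtain ⟨p, q, rfl⟩ := exists_eq_unitDiv_add_unitDiv hB hBfin hBdeg
  by_cases hpq : SameEdgeInterior Γ p q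
  · obtain ⟨v, q', hv⟩ := exists_linEquiv_inl_add_of_sameEdgeInterior hpq
    exact ⟨_, admissibleRep_iff.2 ⟨hDxB.trans (hv.add_left _), _, _, rfl,
      not_sameEdgeInterior_inl_left v q'⟩⟩
  · exact ⟨_, admissibleRep_iff.2 ⟨hDxB, p, q, rfl, hpq⟩⟩

section Consecutive

open Set

variable {Γ : MetricGraphModel} {D Dx : Divisor Γ} {x : Γ.V} {e : Γ.E} {s : ℝ}

lemma AdmissibleRep.exists_support_eq (h : AdmissibleRep Γ D x Dx) :
    ∃ p q, Function.support Dx = {Sum.inl x, p, q} := by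
  obtain ⟨-, p, q, rfl, -⟩ := admissibleRep_iff.1 h
  refine ⟨p, q, ?_⟩
  ext z
  simp only [Function.mem_support, Pi.add_apply, unitDiv, mem_insert_iff, mem_singleton_iff]
  split_ifs <;> simp_all

lemma AdmissibleRep.apply_self_ne_zero (h : AdmissibleRep Γ D x Dx) : Dx (Sum.inl x) ≠ 0 := by
  obtain ⟨p, q, hpq⟩ := h.exists_support_eq
  exact hpq.ge (mem_insert _ _)

lemma AdmissibleRep.divFinSupp (h : AdmissibleRep Γ D x Dx) : DivFinSupp Dx := by
  obtain ⟨p, q, hpq⟩ := h.exists_support_eq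
  rw [DivFinSupp, hpq]
  exact toFinite _

lemma AdmissibleRep.exists_apply_eq_zero (h : AdmissibleRep Γ D x Dx)
    (hcard : 3 < Fintype.card Γ.V) : ∃ v, Dx (Sum.inl v) = 0 := by
  by_contra! hne
  obtain ⟨p, q, hpq⟩ := h.exists_support_eq
  have hsub : Finset.univ.image Sum.inl ⊆ ({Sum.inl x, p, q} : Finset Γ.Pt) := by
    intro z hz
    obtain ⟨v, -, rfl⟩ := Finset.mem_image.1 hz
    simpa using hpq.le (hne v)
  have hle := (Finset.card_le_card hsub).trans Finset.card_le_three
  rw [Finset.card_image_of_injective _ Sum.inl_injective, Finset.card_univ] at hle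
  omega

theorem finite_setOf_specialPt (h3 : Γ.ThreeEdgeConnected) (D : Divisor Γ) :
    {p | SpecialPt Γ D p}.Finite := by
  have hsupp (x : Γ.V) : {p | ∃ Dx, AdmissibleRep Γ D x Dx ∧ Dx p ≠ 0}.Finite := by
    by_cases hx : ∃ Dx, AdmissibleRep Γ D x Dx
    · obtain ⟨Dx, hDx⟩ := hx
      refine hDx.divFinSupp.subset ?_
      rintro p ⟨Dx', hDx', hp⟩
      rwa [hDx.unique h3 hDx']
    · exact finite_empty.subset fun p ⟨Dx, hDx, _⟩ => hx ⟨Dx, hDx⟩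
  refine ((finite_range Sum.inl).union (finite_iUnion hsupp)).subset ?_
  rintro p (⟨v, rfl⟩ | ⟨x, hp⟩)
  · exact Or.inl ⟨v, rfl⟩
  · exact Or.inr (mem_iUnion.2 ⟨x, hp⟩)

lemma SpecialPt.exists_admissibleRep_apply_ne_zero (hdeg : divDegree D = 3) (hrk : RankGE Γ D 1)
    {p : Γ.Pt} (hp : SpecialPt Γ D p) : ∃ y Dy, AdmissibleRep Γ D y Dy ∧ Dy p ≠ 0 := by
  obtain ⟨v, rfl⟩ | hp := hp
  · obtain ⟨Dv, hDv⟩ := exists_admissibleRep hdeg hrk v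
    exact ⟨v, Dv, hDv, hDv.apply_self_ne_zero⟩
  · exact hp

lemma injOn_ptAt (e : Γ.E) : InjOn (ptAt Γ e) (Ioo 0 (Γ.len e)) := by
  intro s hs t ht hst
  rw [ptAt_of_mem_Ioo hs, ptAt_of_mem_Ioo ht] at hst
  simpa [Subtype.ext_iff] using hst

lemma liesOn_iff (hs : s ∈ Icc 0 (Γ.len e)) {p : Γ.Pt} : LiesOn Γ e p s ↔ p = ptAt Γ e s := by
  constructor
  · rintro (⟨rfl, rfl⟩ | ⟨rfl, rfl⟩ | ⟨h, rfl⟩)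
    · rw [ptAt_zero]
    · rw [ptAt_len]
    · rw [ptAt_of_mem_Ioo h]
  · rintro rfl
    rcases hs.1.eq_or_lt with rfl | h0
    · exact Or.inl ⟨ptAt_zero e, rfl⟩
    rcases hs.2.eq_or_lt with rfl | hL
    · exact Or.inr (Or.inl ⟨ptAt_len e, rfl⟩)
    · exact Or.inr (Or.inr ⟨⟨h0, hL⟩, ptAt_of_mem_Ioo ⟨h0, hL⟩⟩)

lemma finite_setOf_specialPt_ptAt (h3 : Γ.ThreeEdgeConnected) (D : Divisor Γ) (e : Γ.E) :
    {s ∈ Icc 0 (Γ.len e) | SpecialPt Γ D (ptAt Γ e s)}.Finite := by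
  have hint : {s ∈ Ioo 0 (Γ.len e) | SpecialPt Γ D (ptAt Γ e s)}.Finite :=
    .of_finite_image ((finite_setOf_specialPt h3 D).subset (image_subset_iff.2 fun s hs => hs.2))
      ((injOn_ptAt e).mono (sep_subset _ _))
  refine (hint.union (toFinite {0, Γ.len e})).subset ?_
  rintro s ⟨hs, hspec⟩
  rcases hs.1.eq_or_lt with h | h0
  · exact Or.inr (Or.inl h.symm)
  rcases hs.2.eq_or_lt with h | hL
  · exact Or.inr (Or.inr h)
  · exact Or.inl ⟨⟨h0, hL⟩, hspec⟩

lemma exists_covBy_not_iff {α : Type*} [PartialOrder α] [LocallyFiniteOrder α] {P : α → Prop}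
    {a b : α} (hab : a ≤ b) (hP : ¬(P a ↔ P b)) : ∃ s t, s ⋖ t ∧ ¬(P s ↔ P t) := by
  by_contra! h
  have hmono : Monotone P := (monotone_iff_forall_covBy P).2 fun s t hst => (h s t hst).1
  have hanti : Monotone (¬P ·) :=
    (monotone_iff_forall_covBy _).2 fun s t hst => mt (h s t hst).2
  exact hP ⟨hmono hab, fun hb => of_not_not fun ha => hanti hab ha hb⟩

lemma exists_segment_not_iff (h3 : Γ.ThreeEdgeConnected) (D : Divisor Γ) (e : Γ.E)
    {P : Γ.Pt → Prop} (hP : ¬(P (Sum.inl (Γ.src e)) ↔ P (Sum.inl (Γ.tgt e)))) :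
    ∃ s t p q, s < t ∧ LiesOn Γ e p s ∧ LiesOn Γ e q t ∧ SpecialPt Γ D p ∧ SpecialPt Γ D q ∧
      ¬(P p ↔ P q) ∧ ∀ r, s < r → r < t → ∀ z, LiesOn Γ e z r → ¬ SpecialPt Γ D z := by
  let F := {s ∈ Icc 0 (Γ.len e) | SpecialPt Γ D (ptAt Γ e s)}
  have hlen := (Γ.len_pos e).le
  have : Fintype F := (finite_setOf_specialPt_ptAt h3 D e).fintype
  let _ : LocallyFiniteOrder F := Fintype.toLocallyFiniteOrder
  let a : F := ⟨0, left_mem_Icc.2 hlen, Or.inl ⟨_, ptAt_zero e⟩⟩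
  let b : F := ⟨Γ.len e, right_mem_Icc.2 hlen, Or.inl ⟨_, ptAt_len e⟩⟩
  obtain ⟨⟨s, hs, hsS⟩, ⟨t, ht, htS⟩, hst, hPst⟩ :=
    exists_covBy_not_iff (P := fun s : F => P (ptAt Γ e s)) (a := a) (b := b) hlen
      (by simpa [a, b] using hP)
  refine ⟨s, t, _, _, hst.lt, (liesOn_iff hs).2 rfl, (liesOn_iff ht).2 rfl, hsS, htS, hPst,
    fun r hsr hrt z hz hzS => ?_⟩
  have hr : r ∈ Icc 0 (Γ.len e) := ⟨hs.1.trans hsr.le, hrt.le.trans ht.2⟩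
  rw [(liesOn_iff hr).1 hz] at hzS
  exact hst.2 (c := ⟨r, hr, hzS⟩) hsr hrt

end Consecutive

/-- On a `3`-edge connected metric graph whose canonical
model has more than `3` vertices, for every `D ∈ W¹₃(Γ)` and every vertex `x`
there is a vertex `y` whose admissible representative is consecutive to the
one of `x`. -/
theorem exists_consecutive_admissible
    (Γ : MetricGraphModel) (hcan : Γ.IsCanonical) (h3ec : Γ.ThreeEdgeConnected)
    (hcard : 3 < Fintype.card Γ.V)
    (D : MetricGraphModel.Divisor Γ) (hfin : MetricGraphModel.DivFinSupp D)
    (hdeg : MetricGraphModel.divDegree D = 3) (hrk : MetricGraphModel.RankGE Γ D 1) :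
    ∀ x : Γ.V, ∃ (y : Γ.V) (Dx Dy : MetricGraphModel.Divisor Γ),
      AdmissibleRep Γ D x Dx ∧ AdmissibleRep Γ D y Dy ∧ Consecutive Γ D Dx Dy := by
  intro x
  obtain ⟨Dx, hDx⟩ := exists_admissibleRep hdeg hrk x
  obtain ⟨v, hv⟩ := hDx.exists_apply_eq_zero hcard
  obtain ⟨W, hW⟩ := hcan.1.2 x v
  obtain ⟨⟨e, _⟩, -, he⟩ := hW.exists_mem_edgeCut (A := {w | Dx (Sum.inl w) ≠ 0})
    (by simpa using hDx.apply_self_ne_zero) (by simpa using hv)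
  obtain ⟨s, t, p, q, hst, hp, hq, hpS, hqS, hpq, hempty⟩ :=
    exists_segment_not_iff h3ec D e (P := (Dx · ≠ 0)) (by simpa [mem_edgeCut] using he)
  by_cases hDp : Dx p = 0
  · have hDq : Dx q ≠ 0 := fun hDq => hpq (by simp [hDp, hDq])
    obtain ⟨y, Dy, hDy, hDyp⟩ := hpS.exists_admissibleRep_apply_ne_zero hdeg hrk
    exact ⟨y, Dx, Dy, hDx, hDy, fun h => hDyp (h ▸ hDp),
      e, s, t, hst, p, q, hp, hq, Or.inr ⟨hDyp, hDq⟩, hempty⟩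
  · have hDq : Dx q = 0 := by_contra fun hDq => hpq (by simp [hDp, hDq])
    obtain ⟨y, Dy, hDy, hDyq⟩ := hqS.exists_admissibleRep_apply_ne_zero hdeg hrk
    exact ⟨y, Dx, Dy, hDx, hDy, fun h => hDyq (h ▸ hDq),
      e, s, t, hst, p, q, hp, hq, Or.inl ⟨hDp, hDyq⟩, hempty⟩
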